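/- Let f(z) = Σ_{α∈A} a_α z^α be a Laurent polynomial in n variables with finite nonempty support A ⊆ ℤⁿ and nonzero complex coefficients, and assume its Newton polytope Δ_f has nonempty interior in ℝⁿ. Then the set of connected components of the complement in the torus Tⁿ = (ℝ/2πℤ)ⁿ of the closure of the coamoeba of V_f is finite, of cardinality at most n! · λ(Δ_f), where λ denotes n-dimensional Lebesgue measure. (Theorem 5.19(b).) -/

import Mathlib

open Complex
open scoped ENNReal

/-!
Pull `f` back along `exp` to the exponential sum `F(x + iθ) = ∑ α ∈ A, a α * exp ⟨α, x + iθ⟩`. When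
`θ` is not in the lifted coamoeba, `F(x + iθ)` has a continuous logarithm in `x`, and comparing it
with the logarithm of the dominant term deep in the normal cone of each vertex `α` of the Newton
polytope gives an integer label `k α`. A translation of `θ` by `2πm` subtracts `⟨α, m⟩` from the
label. By the argument principle on the rectangles `x + sv, θ + tv`, the labels of `θ` and `θ + v`
differ by a function on the vertices that is monotone along `v`; if they differ by a constant, there
are no zeros over the segment from `θ` to `θ + v`, and the two points lie in the same component.

It remains to count labels. Take a pulling triangulation of the vertex set. Applied to the cones
dual to the faces, the Euler relation shows that weights on pairwise monotone labels vanish as soon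
as the induced weights on the restrictions to each simplex do. Hence a family of pairwise monotone
labels has at most as many members as there are restricted labels, summed over the simplices.
Applied to the lattice translates of the labels, in a large box, this bounds the number of
components by the sum of the normalised volumes of the simplices, which is at most `n!` times the
volume of the Newton polytope.
-/

namespace Coamoeba

open Filter Set Topology MeasureTheory

/-! ### The Euler relation -/

section Euler

variable {J G : Type*} [Fintype J] [AddCommGroup G]

lemma sum_filter_eq_zero_of_fibers {B : Type*} [DecidableEq B] {c : J → G} {r : J → B}
    {Q : J → Prop} [DecidablePred Q]
    (hQ : ∀ i j, r i = r j → Q i → Q j) (h : ∀ k, Q k → ∑ i with r i = r k, c i = 0) :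
    ∑ i with Q i, c i = 0 := by
  rw [← Finset.sum_fiberwise_of_maps_to (g := r) fun i hi => Finset.mem_image_of_mem r hi]
  refine Finset.sum_eq_zero fun b hb => ?_
  obtain ⟨k, hk, rfl⟩ := Finset.mem_image.1 hb
  rw [Finset.mem_filter_univ] at hk
  rw [← h k hk, Finset.filter_filter]
  congr 1 with i
  simpa using fun hi => hQ k i hi.symm hk

lemma eventually_mem_iff_not_isGreatest {K : Set ℝ} (hK : IsClosed K) (hK' : K.OrdConnected)
    (t : ℝ) : ∀ᶠ u in 𝓝[>] t, (u ∈ K ↔ t ∈ K ∧ ¬ IsGreatest K t) := by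
  by_cases ht : t ∈ K
  · by_cases hmax : IsGreatest K t
    · filter_upwards [self_mem_nhdsWithin] with u hu
      simpa [hmax] using fun h => (hmax.2 h).not_gt hu
    · obtain ⟨s, hs, hts⟩ : ∃ s ∈ K, t < s := by simpa [IsGreatest, ht, upperBounds] using hmax
      filter_upwards [Ioo_mem_nhdsGT hts] with u hu
      simpa [ht, hmax] using hK'.out ht hs ⟨hu.1.le, hu.2.le⟩
  · filter_upwards [nhdsWithin_le_nhds (hK.isOpen_compl.mem_nhds ht)] with u hu
    simpa [ht] using hu

open scoped Classical in
lemma sum_isGreatest_eq_zero {c : J → G} {K : J → Set ℝ} (hK : ∀ j, IsClosed (K j))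
    (hK' : ∀ j, (K j).OrdConnected) (h : ∀ t, ∑ j with t ∈ K j, c j = 0) (t : ℝ) :
    ∑ j with IsGreatest (K j) t, c j = 0 := by
  obtain ⟨u, hu⟩ :=
    (eventually_all.2 fun j => eventually_mem_iff_not_isGreatest (hK j) (hK' j) t).exists
  have hsplit := Finset.sum_filter_add_sum_filter_not {j | t ∈ K j} (fun j => IsGreatest (K j) t) c
  rw [Finset.filter_filter, Finset.filter_filter, h t] at hsplit
  simp only [← hu] at hsplit
  rw [h u, add_zero] at hsplit
  rw [← hsplit]
  congr 1 with j
  simpa using fun hj : IsGreatest (K j) t => hj.1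

open scoped Classical in
lemma sum_nonempty_eq_zero_of_real {c : J → G} {K : J → Set ℝ} (hK : ∀ j, IsCompact (K j))
    (hK' : ∀ j, (K j).OrdConnected) (h : ∀ t, ∑ j with t ∈ K j, c j = 0) :
    ∑ j with (K j).Nonempty, c j = 0 := by
  refine sum_filter_eq_zero_of_fibers (r := fun j => {t | IsGreatest (K j) t})
    (fun i j hij hi => ?_) fun k hk => ?_
  · obtain ⟨t, ht⟩ := (hK i).exists_isGreatest hi
    have : t ∈ {t | IsGreatest (K j) t} := hij ▸ ht
    exact ⟨t, this.1⟩
  · obtain ⟨t, ht⟩ := (hK k).exists_isGreatest hk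
    rw [← sum_isGreatest_eq_zero (fun j => (hK j).isClosed) hK' h t]
    congr 1 with i
    simp only [Finset.mem_filter_univ]
    refine ⟨fun hi => ?_, fun hi => ?_⟩
    · have : t ∈ {t | IsGreatest (K i) t} := hi ▸ ht
      exact this
    · ext u
      exact ⟨fun hu => hu.unique hi ▸ ht, fun hu => hu.unique ht ▸ hi⟩

variable {ι : Type*}

open scoped Classical in
lemma sum_nonempty_eq_zero_of_eq_off {c : J → G} (T : Finset ι) (p : ι → ℝ)
    {K : J → Set (ι → ℝ)} (hK : ∀ j, IsCompact (K j)) (hK' : ∀ j, Convex ℝ (K j))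
    (hp : ∀ j, ∀ z ∈ K j, ∀ i ∉ T, z i = p i) (h : ∀ z, ∑ j with z ∈ K j, c j = 0) :
    ∑ j with (K j).Nonempty, c j = 0 := by
  induction T using Finset.induction_on generalizing p K with
  | empty =>
    rw [← h p]
    congr 1 with j
    simp only [Finset.mem_filter_univ]
    refine ⟨?_, fun hj => ⟨p, hj⟩⟩
    rintro ⟨z, hz⟩
    exact (funext fun i => hp j z hz i (Finset.notMem_empty i) : z = p) ▸ hz
  | insert i T hi ih =>
    have himage := sum_nonempty_eq_zero_of_real (c := c) (K := fun j => (fun z => z i) '' K j)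
      (fun j => (hK j).image (continuous_apply i))
      (fun j => ((hK' j).linear_image (LinearMap.proj i)).ordConnected) fun t => ?_
    · simpa only [image_nonempty] using himage
    refine ih (Function.update p i t) (K := fun j => K j ∩ {z | z i = t})
      (fun j => (hK j).inter_right (isClosed_eq (continuous_apply i) continuous_const))
      (fun j => (hK' j).inter
        (convex_hyperplane (f := fun z : ι → ℝ => z i) ⟨fun _ _ => rfl, fun _ _ => rfl⟩ t)) ?_ ?_
    · rintro j z ⟨hz, hzt⟩ i' hi'
      obtain rfl | hne := eq_or_ne i' i
      · simpa using hzt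
      · simpa [hne] using hp j z hz i' (by simp [hne, hi'])
    · intro z
      by_cases hz : z i = t
      · simpa [hz] using h z
      · simp [hz]

open scoped Classical in
lemma sum_nonempty_eq_zero [Finite ι] {c : J → G} {K : J → Set (ι → ℝ)} (hK : ∀ j, IsCompact (K j))
    (hK' : ∀ j, Convex ℝ (K j)) (h : ∀ z, ∑ j with z ∈ K j, c j = 0) :
    ∑ j with (K j).Nonempty, c j = 0 := by
  cases nonempty_fintype ι
  exact sum_nonempty_eq_zero_of_eq_off Finset.univ 0 hK hK' (by simp) h

open scoped Classical in
lemma sum_ne_bot_eq_zero_of_norm_le [Fintype ι] {c : J → G} {C : J → PointedCone ℝ (ι → ℝ)}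
    (hC : ∀ j, IsClosed (C j : Set (ι → ℝ))) (ℓ : (ι → ℝ) →L[ℝ] ℝ)
    (hℓ : ∀ j, ∀ z ∈ C j, ‖z‖ ≤ ℓ z) (h : ∀ z ≠ 0, ∑ j with z ∈ C j, c j = 0) :
    ∑ j with C j ≠ ⊥, c j = 0 := by
  have hslice : ∀ j, C j ≠ ⊥ ↔ ((C j : Set (ι → ℝ)) ∩ {z | ℓ z = 1}).Nonempty := by
    intro j
    rw [Submodule.ne_bot_iff]
    constructor
    · rintro ⟨z, hz, hz0⟩
      have hpos : 0 < ℓ z := (norm_pos_iff.2 hz0).trans_le (hℓ j z hz)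
      exact ⟨(ℓ z)⁻¹ • z, (C j).smul_mem (inv_nonneg.2 hpos.le) hz, by simp [hpos.ne']⟩
    · rintro ⟨z, hz, hz1⟩
      refine ⟨z, hz, ?_⟩
      rintro rfl
      simp at hz1
  simp only [hslice]
  refine sum_nonempty_eq_zero (fun j => ?_)
    (fun j => (C j).convex.inter (convex_hyperplane ℓ.isBoundedLinearMap.toIsLinearMap 1))
    fun z => ?_
  · refine Metric.isCompact_of_isClosed_isBounded
      ((hC j).inter (isClosed_eq ℓ.continuous continuous_const)) ?_
    refine (Metric.isBounded_closedBall (x := (0 : ι → ℝ)) (r := 1)).subset ?_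
    rintro z ⟨hz, hz1 : ℓ z = 1⟩
    simpa [hz1] using hℓ j z hz
  · by_cases hz : ℓ z = 1
    · simpa [hz] using h z (by rintro rfl; simp at hz)
    · simp [hz]

lemma inf_ker_ne_bot {E : Type*} [AddCommGroup E] [Module ℝ E] {C : PointedCone ℝ E}
    (hC : (C : ConvexCone ℝ E).Salient) {ℓ : Module.Dual ℝ E} {p q : E} (hp : p ∈ C)
    (hq : q ∈ C) (hq0 : q ≠ 0) (hℓp : 0 < ℓ p) (hℓq : ℓ q ≤ 0) :
    C ⊓ PointedCone.ofSubmodule (LinearMap.ker ℓ) ≠ ⊥ := by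
  have hp' : (-ℓ q) • p ∈ C := C.smul_mem (neg_nonneg.2 hℓq) hp
  have hq' : ℓ p • q ∈ C := C.smul_mem hℓp.le hq
  refine (Submodule.ne_bot_iff _).2
    ⟨(-ℓ q) • p + ℓ p • q, ⟨C.add_mem hp' hq', by simp; ring⟩, fun h0 => ?_⟩
  refine hC _ hq' (smul_ne_zero hℓp.ne' hq0) ?_
  rwa [← eq_neg_of_add_eq_zero_left h0]

open scoped Classical in
lemma sum_ne_bot_add_sum_inf_ker {E : Type*} [AddCommGroup E] [Module ℝ E] (c : J → G)
    {C : J → PointedCone ℝ E} (hC : ∀ j, (C j : ConvexCone ℝ E).Salient) (ℓ : Module.Dual ℝ E) :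
    ∑ j with C j ≠ ⊥, c j + ∑ j with C j ⊓ PointedCone.ofSubmodule (LinearMap.ker ℓ) ≠ ⊥, c j =
      ∑ j with C j ⊓ (PointedCone.positive ℝ ℝ).comap ℓ ≠ ⊥, c j +
        ∑ j with C j ⊓ (PointedCone.positive ℝ ℝ).comap (-ℓ) ≠ ⊥, c j := by
  refine Eq.trans ?_ Finset.sum_union_inter
  congr 2 <;> ext j <;> simp only [Finset.mem_union, Finset.mem_inter, Finset.mem_filter_univ,
    Submodule.ne_bot_iff, Submodule.mem_inf, PointedCone.mem_comap, PointedCone.mem_positive,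
    LinearMap.neg_apply, neg_nonneg, PointedCone.mem_ofSubmodule_iff, LinearMap.mem_ker]
  · constructor
    · rintro ⟨z, hz, hz0⟩
      exact (le_total 0 (ℓ z)).imp (fun h => ⟨z, ⟨hz, h⟩, hz0⟩) fun h => ⟨z, ⟨hz, h⟩, hz0⟩
    · rintro (⟨z, ⟨hz, -⟩, hz0⟩ | ⟨z, ⟨hz, -⟩, hz0⟩) <;> exact ⟨z, hz, hz0⟩
  · constructor
    · rintro ⟨z, ⟨hz, h⟩, hz0⟩
      exact ⟨⟨z, ⟨hz, h.ge⟩, hz0⟩, ⟨z, ⟨hz, h.le⟩, hz0⟩⟩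
    · rintro ⟨⟨p, ⟨hp, hℓp⟩, hp0⟩, ⟨q, ⟨hq, hℓq⟩, hq0⟩⟩
      obtain h | h := hℓp.eq_or_lt
      · exact ⟨p, ⟨hp, h.symm⟩, hp0⟩
      · simpa [Submodule.ne_bot_iff] using inf_ker_ne_bot (hC j) hp hq hq0 h hℓq

open scoped Classical in
lemma sum_ne_bot_eq_zero_of_abs_eq [Finite ι] {c : J → G} (T : Finset ι) (s : ι → ℝ)
    {C : J → PointedCone ℝ (ι → ℝ)} (hC : ∀ j, IsClosed (C j : Set (ι → ℝ)))
    (hC' : ∀ j, (C j : ConvexCone ℝ (ι → ℝ)).Salient)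
    (hs : ∀ j, ∀ z ∈ C j, ∀ i ∉ T, |z i| = s i * z i)
    (h : ∀ z ≠ 0, ∑ j with z ∈ C j, c j = 0) :
    ∑ j with C j ≠ ⊥, c j = 0 := by
  induction T using Finset.induction_on generalizing s C with
  | empty =>
    cases nonempty_fintype ι
    refine sum_ne_bot_eq_zero_of_norm_le hC (∑ i, s i • ContinuousLinearMap.proj i)
      (fun j z hz => ?_) h
    calc ‖z‖ ≤ ∑ i, |z i| := (pi_norm_le_iff_of_nonneg (by positivity)).2 fun i =>
          Finset.single_le_sum (f := fun i => |z i|) (fun _ _ => abs_nonneg _) (Finset.mem_univ i)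
      _ = (∑ i, s i • ContinuousLinearMap.proj (R := ℝ) (φ := fun _ : ι => ℝ) i) z := by
          simp [fun i => hs j z hz i (Finset.notMem_empty i)]
  | insert i T hi ih =>
    have hrestrict : ∀ (D : PointedCone ℝ (ι → ℝ)) (e : ℝ), IsClosed (D : Set (ι → ℝ)) →
        (∀ z ∈ D, |z i| = e * z i) → ∑ j with C j ⊓ D ≠ ⊥, c j = 0 := by
      intro D e hD he
      refine ih (Function.update s i e) (fun j => (hC j).inter hD)
        (fun j z hz hz0 hz' => hC' j z hz.1 hz0 hz'.1) ?_ fun z hz0 => ?_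
      · rintro j z ⟨hz, hzD⟩ i' hi'
        obtain rfl | hne := eq_or_ne i' i
        · simpa using he z hzD
        · simpa [hne] using hs j z hz i' (by simp [hne, hi'])
      · by_cases hz : z ∈ D
        · simpa [hz] using h z hz0
        · simp [hz]
    have hsplit := sum_ne_bot_add_sum_inf_ker c hC' (LinearMap.proj (R := ℝ) i)
    rwa [hrestrict _ 0 (isClosed_eq (continuous_apply i) continuous_const) fun z hz => ?_,
      hrestrict _ 1 (isClosed_le continuous_const (continuous_apply i)) fun z hz => ?_,
      hrestrict _ (-1) (isClosed_le continuous_const (continuous_apply i).neg) fun z hz => ?_,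
      add_zero, add_zero] at hsplit
    · simpa using hz
    · simpa using hz
    · simpa using hz

open scoped Classical in
lemma sum_ne_bot_eq_zero [Finite ι] {c : J → G} {C : J → PointedCone ℝ (ι → ℝ)}
    (hC : ∀ j, IsClosed (C j : Set (ι → ℝ)))
    (hC' : ∀ j, (C j : ConvexCone ℝ (ι → ℝ)).Salient) (h : ∀ z ≠ 0, ∑ j with z ∈ C j, c j = 0) :
    ∑ j with C j ≠ ⊥, c j = 0 := by
  cases nonempty_fintype ι
  exact sum_ne_bot_eq_zero_of_abs_eq Finset.univ 0 hC hC' (by simp) h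

lemma sum_powerset_erase_empty_neg_one_pow_card {A : Type*} [DecidableEq A] (Q : Finset A)
    (g : G) :
    ∑ s ∈ Q.powerset.erase ∅, (-1 : ℤ) ^ (s.card + 1) • g = if Q.Nonempty then g else 0 := by
  have hall : ∑ s ∈ Q.powerset, (-1 : ℤ) ^ (s.card + 1) = if Q.Nonempty then 0 else -1 := by
    simp_rw [pow_succ, ← Finset.sum_mul, Finset.sum_powerset_neg_one_pow_card]
    obtain rfl | hQ := Q.eq_empty_or_nonempty
    · simp
    · simp [hQ, hQ.ne_empty]
  rw [← Finset.sum_smul, Finset.sum_erase_eq_sub (Finset.empty_mem_powerset Q), hall]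
  split_ifs <;> simp

open scoped Classical in
/-- Inclusion–exclusion over the intersections of the cones `C i α`, `α ∈ P i`, reduces the Euler
relation for unions of cones to the one for single cones; the common vector keeps these
intersections nontrivial. -/
lemma sum_nonempty_eq_zero_of_union [Finite ι] {A : Type*} {μ : J → G}
    {C : J → A → PointedCone ℝ (ι → ℝ)} {P : J → Finset A}
    (hC : ∀ i, ∀ α ∈ P i, IsClosed (C i α : Set (ι → ℝ)))
    (hC' : ∀ i, ∀ α ∈ P i, (C i α : ConvexCone ℝ (ι → ℝ)).Salient)
    (hv : ∀ i, (P i).Nonempty → ∃ v ≠ 0, ∀ α ∈ P i, v ∈ C i α)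
    (h : ∀ z ≠ 0, ∑ i with ∃ α ∈ P i, z ∈ C i α, μ i = 0) :
    ∑ i with (P i).Nonempty, μ i = 0 := by
  let K : (Σ i, (P i).powerset.erase ∅) → PointedCone ℝ (ι → ℝ) := fun x => x.2.1.inf (C x.1)
  have hmemK : ∀ x z, z ∈ K x ↔ ∀ α ∈ x.2.1, z ∈ C x.1 α := fun x z => by
    simp [K, Finset.inf_eq_iInf]
  have hsub : ∀ x : Σ i, (P i).powerset.erase ∅, x.2.1.Nonempty ∧ x.2.1 ⊆ P x.1 := fun x => by
    obtain ⟨hne, hP⟩ := Finset.mem_erase.1 x.2.2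
    exact ⟨Finset.nonempty_iff_ne_empty.2 hne, Finset.mem_powerset.1 hP⟩
  have hK : ∀ x, IsClosed (K x : Set (ι → ℝ)) := fun x => by
    have hset : (K x : Set (ι → ℝ)) = ⋂ α ∈ x.2.1, C x.1 α := by ext z; simp [hmemK]
    rw [hset]
    exact isClosed_biInter fun α hα => hC _ α ((hsub x).2 hα)
  have hK' : ∀ x, (K x : ConvexCone ℝ (ι → ℝ)).Salient := fun x z hz hz0 hz' => by
    obtain ⟨α, hα⟩ := (hsub x).1
    exact hC' _ α ((hsub x).2 hα) z ((hmemK x z).1 hz α hα) hz0 ((hmemK x _).1 hz' α hα)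
  have hbot : ∀ x, K x ≠ ⊥ := fun x => by
    obtain ⟨v, hv0, hv⟩ := hv x.1 ((hsub x).1.mono (hsub x).2)
    exact (Submodule.ne_bot_iff _).2 ⟨v, (hmemK x v).2 fun α hα => hv α ((hsub x).2 hα), hv0⟩
  have hEuler := sum_ne_bot_eq_zero (c := fun x => (-1 : ℤ) ^ (x.2.1.card + 1) • μ x.1) hK hK'
    fun z hz => ?_
  · rw [Finset.filter_true_of_mem fun x _ => hbot x, Fintype.sum_sigma] at hEuler
    rw [← hEuler, Finset.sum_filter]
    refine Finset.sum_congr rfl fun i _ => ?_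
    rw [← sum_powerset_erase_empty_neg_one_pow_card]
    exact (Finset.sum_coe_sort _ fun s : Finset A => (-1 : ℤ) ^ (s.card + 1) • μ i).symm
  · rw [← h z hz, Finset.sum_filter, Finset.sum_filter, Fintype.sum_sigma]
    refine Finset.sum_congr rfl fun i _ => ?_
    have hQ : (∃ α ∈ P i, z ∈ C i α) ↔ ((P i).filter (z ∈ C i ·)).Nonempty := by
      simp [Finset.Nonempty]
    simp_rw [hmemK, hQ, ← sum_powerset_erase_empty_neg_one_pow_card]
    rw [Finset.sum_coe_sort ((P i).powerset.erase ∅)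
      fun s : Finset A => if ∀ α ∈ s, z ∈ C i α then (-1 : ℤ) ^ (s.card + 1) • μ i else 0,
      ← Finset.sum_filter]
    congr 1 with s
    simp only [Finset.mem_filter, Finset.mem_erase, Finset.mem_powerset, Finset.subset_iff]
    grind

lemma sum_filter_eq_eq_zero_of_sum_filter_le {X : Type*} [PartialOrder X] [DecidableEq X]
    [DecidableLE X] {c : J → G} {r : J → X}
    (h : ∀ k, ∑ i with r i ≤ r k, c i = 0) (x : X) : ∑ i with r i = x, c i = 0 := by
  suffices hfiber : ∀ k, ∑ i with r i = r k, c i = 0 from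
    sum_filter_eq_zero_of_fibers (r := r) (fun i j hij hi => hij ▸ hi) fun k _ => hfiber k
  have : IsTrans J (InvImage (· < ·) r) := ⟨fun i j k (hij : r i < r j) hjk => hij.trans hjk⟩
  have : Std.Irrefl (InvImage (· < ·) r) := ⟨fun i => lt_irrefl (r i)⟩
  intro k
  induction k using (Finite.wellFounded_of_trans_of_irrefl (InvImage (· < ·) r)).induction with
  | _ k ih =>
    have hlt : ∑ i with r i ≤ r k ∧ ¬ r i = r k, c i = 0 :=
      sum_filter_eq_zero_of_fibers (r := r) (fun i j hij hi => hij ▸ hi)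
        fun i hi => ih i (lt_of_le_of_ne hi.1 hi.2)
    have hsplit := Finset.sum_filter_add_sum_filter_not {i | r i ≤ r k} (fun i => r i = r k) c
    rw [Finset.filter_filter, Finset.filter_filter, hlt, h, add_zero] at hsplit
    rw [← hsplit]
    congr 1 with i
    simpa using le_of_eq

end Euler

/-! ### Faces of a finite family of linear functionals -/

section Faces

variable {P E : Type*} [AddCommGroup E] [Module ℝ E] (φ : P → Module.Dual ℝ E)

/-- The face of `S` selected by `y`: the elements of `S` whose functional is maximal at `y`. For
the pairing `φ` of `ℤⁿ` with `ℝⁿ` these are the lattice points of `S` on the face of the polytope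
`conv S` with outer normal `y`. -/
noncomputable def face (S : Finset P) (y : E) : Finset P := {α ∈ S | ∀ γ ∈ S, φ γ y ≤ φ α y}

variable {φ} {S : Finset P} {α : P} {y v w : E} {t : ℝ}

lemma mem_face : α ∈ face φ S y ↔ α ∈ S ∧ ∀ γ ∈ S, φ γ y ≤ φ α y := Finset.mem_filter

lemma face_subset : face φ S y ⊆ S := Finset.filter_subset _ _

lemma face_nonempty (hS : S.Nonempty) (y : E) : (face φ S y).Nonempty := by
  obtain ⟨α, hα, h⟩ := S.exists_max_image (φ · y) hS
  exact ⟨α, mem_face.2 ⟨hα, h⟩⟩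

lemma apply_eq_of_mem_face {γ : P} (hα : α ∈ face φ S y) (hγ : γ ∈ face φ S y) :
    φ α y = φ γ y :=
  le_antisymm ((mem_face.1 hγ).2 α (face_subset hα)) ((mem_face.1 hα).2 γ (face_subset hγ))

lemma face_eq_self_iff : face φ S y = S ↔ ∀ α ∈ S, ∀ γ ∈ S, φ α y = φ γ y :=
  ⟨fun h _ hα _ hγ => apply_eq_of_mem_face (S := S) (h.symm ▸ hα) (h.symm ▸ hγ),
    fun h => face_subset.antisymm fun α hα => mem_face.2 ⟨hα, fun γ hγ => (h γ hγ α hα).le⟩⟩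

lemma card_face_lt_card (h : face φ S y ≠ S) : (face φ S y).card < S.card :=
  Finset.card_lt_card (Finset.ssubset_iff_subset_ne.2 ⟨face_subset, h⟩)

lemma tendsto_sub_apply_add_smul {γ : P} (h : φ γ w < φ α w) (y : E) :
    Tendsto (fun K : ℝ => φ α (y + K • w) - φ γ (y + K • w)) atTop atTop := by
  have heq : (fun K : ℝ => φ α (y + K • w) - φ γ (y + K • w)) =
      fun K : ℝ => (φ α y - φ γ y) + K * (φ α w - φ γ w) := by
    ext K
    simp only [map_add, map_smul, smul_eq_mul]
    ring
  rw [heq]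
  exact tendsto_atTop_add_const_left _ _ (tendsto_id.atTop_mul_const (sub_pos.2 h))

lemma eventually_forall_apply_add_smul_lt (S : Finset P) (w y : E) :
    ∀ᶠ K : ℝ in atTop, ∀ α ∈ S, ∀ γ ∈ S, φ γ w < φ α w →
      φ γ (y + K • w) < φ α (y + K • w) := by
  simp only [eventually_all_finset, eventually_imp_distrib_left]
  intro α _ γ _ h
  filter_upwards [(tendsto_sub_apply_add_smul h y).eventually_gt_atTop 0] with K hK
  exact sub_pos.1 hK

lemma eventually_face_add_smul_eq (S : Finset P) (w y : E) :
    ∀ᶠ K : ℝ in atTop, face φ S (y + K • w) = face φ (face φ S w) y := by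
  filter_upwards [eventually_forall_apply_add_smul_lt (φ := φ) S w y] with K hK
  have hadd : ∀ α, φ α (y + K • w) = φ α y + K * φ α w := fun α => by simp
  ext α
  constructor <;> intro h
  · have hαw : α ∈ face φ S w := mem_face.2 ⟨face_subset h, fun γ hγ => not_lt.1 fun hlt =>
      ((mem_face.1 h).2 γ hγ).not_gt (hK γ hγ α (face_subset h) hlt)⟩
    refine mem_face.2 ⟨hαw, fun γ hγ => ?_⟩
    simpa [hadd, apply_eq_of_mem_face hγ hαw] using (mem_face.1 h).2 γ (face_subset hγ)
  · have hαw := face_subset h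
    refine mem_face.2 ⟨face_subset hαw, fun γ hγ => ?_⟩
    obtain hlt | heq := ((mem_face.1 hαw).2 γ hγ).lt_or_eq
    · exact (hK α (face_subset hαw) γ hγ hlt).le
    · have hγw : γ ∈ face φ S w := mem_face.2 ⟨hγ, fun δ hδ => heq ▸ (mem_face.1 hαw).2 δ hδ⟩
      simpa [hadd, heq] using (mem_face.1 h).2 γ hγw

variable (φ S) in
/-- Every element of `S` is exposed: it is the only maximiser over `S` of some direction. -/
def InConvexPosition : Prop := ∀ α ∈ S, ∃ y, face φ S y = {α}

lemma face_face_eq_singleton (hα : α ∈ face φ S w) (hy : face φ S y = {α}) :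
    face φ (face φ S w) y = {α} := by
  have hmax := mem_face.1 (hy ▸ Finset.mem_singleton_self α : α ∈ face φ S y)
  ext γ
  rw [Finset.mem_singleton]
  refine ⟨fun hγ => ?_, ?_⟩
  · have : γ ∈ face φ S y := mem_face.2
      ⟨face_subset (face_subset hγ), fun δ hδ => (hmax.2 δ hδ).trans ((mem_face.1 hγ).2 α hα)⟩
    simpa [hy] using this
  · rintro rfl
    exact mem_face.2 ⟨hα, fun δ hδ => hmax.2 δ (face_subset hδ)⟩

lemma InConvexPosition.restrict_face (h : InConvexPosition φ S) (w : E) :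
    InConvexPosition φ (face φ S w) := fun α hα =>
  (h α (face_subset hα)).imp fun _ => face_face_eq_singleton hα

variable (φ S) in
/-- The integer labelling `b` of `S` grows along `v`: the direction `v` separates the elements of
`S`, and moving a point `y` along `v` to another normal cone does not decrease the label. This is
what the argument principle gives for the difference of two winding labels. -/
structure IsMonotoneAlong (b : P → ℤ) (v : E) : Prop where
  injOn : Set.InjOn (φ · v) (S : Set P)
  exists_le : ∀ y, ∀ t : ℝ, 0 ≤ t → ∀ α ∈ face φ S y, ∃ γ ∈ face φ S (y + t • v), b α ≤ b γ

variable {b : P → ℤ}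

lemma IsMonotoneAlong.restrict_face (h : IsMonotoneAlong φ S b v) (w : E) :
    IsMonotoneAlong φ (face φ S w) b v where
  injOn := h.injOn.mono (Finset.coe_subset.2 face_subset)
  exists_le y t ht α hα := by
    obtain ⟨K, hy, hyv⟩ := ((eventually_face_add_smul_eq (φ := φ) S w y).and
      (eventually_face_add_smul_eq S w (y + t • v))).exists
    rw [← hyv, add_right_comm]
    exact h.exists_le _ t ht α (hy ▸ hα)

lemma face_eq_singleton_of_injOn (hv : Set.InjOn (φ · v) (S : Set P)) (hα : α ∈ face φ S v) :
    face φ S v = {α} :=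
  Finset.eq_singleton_iff_unique_mem.2 ⟨hα, fun _ hγ =>
    hv (face_subset hγ) (face_subset hα) (apply_eq_of_mem_face hγ hα)⟩

lemma IsMonotoneAlong.exists_apply_lt {β : P} (hS : InConvexPosition φ S)
    (h : IsMonotoneAlong φ S b v) (hβ : β ∈ S) (hα : α ∈ S) (hb : b β < b α) :
    ∃ γ ∈ S, φ γ v < φ α v := by
  by_contra! hmin
  have hmem : α ∈ face φ S (-v) := mem_face.2 ⟨hα, by simpa using hmin⟩
  have hsingle : face φ S (-v) = {α} :=
    face_eq_singleton_of_injOn (by simpa [Set.InjOn] using h.injOn) hmem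
  obtain ⟨y, hy⟩ := hS β hβ
  obtain ⟨K, hK, hK0⟩ :=
    ((eventually_face_add_smul_eq (φ := φ) S (-v) y).and (eventually_ge_atTop 0)).exists
  have hαK : α ∈ face φ S (y + K • -v) := by rw [hK, hsingle]; simp [mem_face]
  obtain ⟨γ, hγ, hle⟩ := h.exists_le _ K hK0 α hαK
  rw [smul_neg, neg_add_cancel_right, hy, Finset.mem_singleton] at hγ
  exact (hγ ▸ hle).not_gt hb

end Faces

/-! ### Normal cones -/

section SupRay

variable {E : Type*} [AddCommGroup E] [Module ℝ E] {C : PointedCone ℝ E} {e z : E}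

lemma mem_sup_hull_singleton :
    z ∈ C ⊔ PointedCone.hull ℝ {e} ↔ ∃ t : ℝ, 0 ≤ t ∧ z - t • e ∈ C := by
  simp only [Submodule.mem_sup, Submodule.mem_span_singleton]
  constructor
  · rintro ⟨c, hc, -, ⟨t, rfl⟩, rfl⟩
    exact ⟨t, t.2, by simpa [NNReal.smul_def] using hc⟩
  · rintro ⟨t, ht, hz⟩
    exact ⟨_, hz, t • e, ⟨⟨t, ht⟩, rfl⟩, sub_add_cancel _ _⟩

lemma salient_sup_hull_singleton (hC : (C : ConvexCone ℝ E).Salient) {ℓ : Module.Dual ℝ E}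
    (hℓ : ∀ z ∈ C, 0 ≤ ℓ z) (he : 0 < ℓ e) :
    (↑(C ⊔ PointedCone.hull ℝ {e}) : ConvexCone ℝ E).Salient := by
  intro z hz hz0 hz'
  obtain ⟨t, ht, hzt⟩ := mem_sup_hull_singleton.1 hz
  obtain ⟨t', ht', hzt'⟩ := mem_sup_hull_singleton.1 hz'
  have hnonneg := hℓ _ hzt
  have hnonneg' := hℓ _ hzt'
  simp only [map_sub, map_neg, map_smul, smul_eq_mul] at hnonneg hnonneg'
  have hmul : (t + t') * ℓ e ≤ 0 := by linarith
  have hadd : t + t' ≤ 0 := nonpos_of_mul_nonpos_left hmul he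
  obtain rfl : t = 0 := by linarith
  obtain rfl : t' = 0 := by linarith
  simp only [zero_smul, sub_zero] at hzt hzt'
  exact hC z hzt hz0 hzt'

lemma isClosed_sup_hull_singleton [TopologicalSpace E] [IsTopologicalAddGroup E]
    [ContinuousSMul ℝ E] (hC : IsClosed (C : Set E)) {ℓ : E →L[ℝ] ℝ}
    (hℓ : ∀ z ∈ C, 0 ≤ ℓ z) (he : 0 < ℓ e) :
    IsClosed (↑(C ⊔ PointedCone.hull ℝ {e}) : Set E) := by
  have hset : (↑(C ⊔ PointedCone.hull ℝ {e}) : Set E) = Prod.snd ''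
      {p : Icc (0 : ℝ) 1 × E | 0 ≤ ℓ p.2 / ℓ e ∧ p.2 - ((p.1 : ℝ) * (ℓ p.2 / ℓ e)) • e ∈ C} := by
    ext z
    rw [SetLike.mem_coe, mem_sup_hull_singleton]
    constructor
    · rintro ⟨t, ht, hz⟩
      have hle : t ≤ ℓ z / ℓ e := by
        rw [le_div_iff₀ he]
        simpa using hℓ _ hz
      obtain h0 | hpos := (ht.trans hle).eq_or_lt
      · obtain rfl : t = 0 := ht.antisymm' (h0 ▸ hle)
        exact ⟨(⟨0, by simp⟩, z), ⟨h0.le, by simpa using hz⟩, rfl⟩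
      · refine ⟨(⟨t / (ℓ z / ℓ e), div_nonneg ht hpos.le, div_le_one_of_le₀ hle hpos.le⟩, z),
          ⟨hpos.le, ?_⟩, rfl⟩
        simpa only [div_mul_cancel₀ _ hpos.ne'] using hz
    · rintro ⟨⟨s, z'⟩, ⟨h0, hz⟩, rfl⟩
      exact ⟨s * (ℓ z' / ℓ e), mul_nonneg s.2.1 h0, hz⟩
  rw [hset]
  have hcont : Continuous fun p : Icc (0 : ℝ) 1 × E => ℓ p.2 / ℓ e :=
    (ℓ.continuous.comp continuous_snd).div_const _
  exact isClosedMap_snd_of_compactSpace _ <| (isClosed_le continuous_const hcont).inter <|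
    hC.preimage <| continuous_snd.sub <|
      ((continuous_subtype_val.comp continuous_fst).mul hcont).smul continuous_const

end SupRay

section NormalCone

variable {P E : Type*} [AddCommGroup E] [Module ℝ E]
  {φ : P → Module.Dual ℝ E} {S : Finset P} {w : P} {α : S} {y v : E}

variable (φ S w) in
/-- Evaluation of the functionals in `S`, normalised to vanish on `w`. It kills exactly the
directions along which all of `S` is constant, which makes the normal cones below salient. -/
def relEval : E →ₗ[ℝ] (S → ℝ) := LinearMap.pi fun α => φ α - φ w

lemma relEval_apply : relEval φ S w y α = φ α y - φ w y := rfl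

lemma relEval_eq_zero (hw : w ∈ S) (hy : face φ S y = S) : relEval φ S w y = 0 := by
  ext α
  exact sub_eq_zero.2 (face_eq_self_iff.1 hy α α.2 w hw)

variable (φ S w α) in
/-- The outer normal cone of the vertex `α` of `S`, in the coordinates `relEval`. -/
def normalCone : PointedCone ℝ (S → ℝ) where
  carrier := {z | z ∈ LinearMap.range (relEval φ S w) ∧ ∀ γ, z γ ≤ z α}
  zero_mem' := ⟨zero_mem _, fun _ => le_rfl⟩
  add_mem' hz hz' := ⟨add_mem hz.1 hz'.1, fun γ => add_le_add (hz.2 γ) (hz'.2 γ)⟩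
  smul_mem' c _ hz := ⟨Submodule.smul_mem _ (c : ℝ) hz.1,
    fun γ => mul_le_mul_of_nonneg_left (hz.2 γ) c.2⟩

lemma mem_normalCone {z : S → ℝ} :
    z ∈ normalCone φ S w α ↔ z ∈ LinearMap.range (relEval φ S w) ∧ ∀ γ, z γ ≤ z α :=
  Iff.rfl

lemma relEval_mem_normalCone : relEval φ S w y ∈ normalCone φ S w α ↔ ↑α ∈ face φ S y := by
  simp [mem_normalCone, mem_face, relEval_apply]

lemma isClosed_normalCone : IsClosed (normalCone φ S w α : Set (S → ℝ)) := by
  have hset : (normalCone φ S w α : Set (S → ℝ)) =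
      (LinearMap.range (relEval φ S w) : Set (S → ℝ)) ∩ ⋂ γ, {z | z γ ≤ z α} := by
    ext z
    simp [mem_normalCone]
  rw [hset]
  exact (Submodule.closed_of_finiteDimensional _).inter
    (isClosed_iInter fun γ => isClosed_le (continuous_apply γ) (continuous_apply α))

lemma salient_normalCone (hw : w ∈ S) : (normalCone φ S w α : ConvexCone ℝ (S → ℝ)).Salient := by
  intro z hz hz0 hz'
  obtain ⟨⟨y, rfl⟩, hle⟩ := mem_normalCone.1 hz
  have hge := (mem_normalCone.1 hz').2
  simp only [Pi.neg_apply, neg_le_neg_iff] at hge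
  refine hz0 (funext fun γ => ?_)
  rw [(hle γ).antisymm (hge γ), ← (hle ⟨w, hw⟩).antisymm (hge ⟨w, hw⟩), relEval_apply, sub_self,
    Pi.zero_apply]

lemma isClosed_normalCone_sup (hα : ∃ γ ∈ S, φ γ v < φ α v) :
    IsClosed (↑(normalCone φ S w α ⊔ PointedCone.hull ℝ {relEval φ S w v}) : Set (S → ℝ)) := by
  obtain ⟨γ, hγ, hlt⟩ := hα
  refine isClosed_sup_hull_singleton isClosed_normalCone
    (ℓ := ContinuousLinearMap.proj α - ContinuousLinearMap.proj ⟨γ, hγ⟩) (fun z hz => ?_) ?_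
  · simpa using (mem_normalCone.1 hz).2 ⟨γ, hγ⟩
  · simpa [relEval_apply] using hlt

lemma salient_normalCone_sup (hw : w ∈ S) (hα : ∃ γ ∈ S, φ γ v < φ α v) :
    (↑(normalCone φ S w α ⊔ PointedCone.hull ℝ {relEval φ S w v}) :
      ConvexCone ℝ (S → ℝ)).Salient := by
  obtain ⟨γ, hγ, hlt⟩ := hα
  refine salient_sup_hull_singleton (salient_normalCone hw)
    (ℓ := LinearMap.proj α - LinearMap.proj ⟨γ, hγ⟩) (fun z hz => ?_) ?_
  · simpa using (mem_normalCone.1 hz).2 ⟨γ, hγ⟩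
  · simpa [relEval_apply] using hlt

lemma relEval_mem_normalCone_sup :
    relEval φ S w y ∈ normalCone φ S w α ⊔ PointedCone.hull ℝ {relEval φ S w v} ↔
      ∃ t : ℝ, 0 ≤ t ∧ ↑α ∈ face φ S (y - t • v) := by
  simp_rw [mem_sup_hull_singleton, ← map_smul, ← map_sub, relEval_mem_normalCone]

lemma mem_range_of_mem_normalCone_sup {z : S → ℝ}
    (hz : z ∈ normalCone φ S w α ⊔ PointedCone.hull ℝ {relEval φ S w v}) :
    z ∈ LinearMap.range (relEval φ S w) := by
  obtain ⟨t, -, hzt⟩ := mem_sup_hull_singleton.1 hz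
  simpa using add_mem (mem_normalCone.1 hzt).1
    (Submodule.smul_mem _ t (LinearMap.mem_range_self (relEval φ S w) v))

lemma relEval_self_mem_normalCone_sup :
    relEval φ S w v ∈ normalCone φ S w α ⊔ PointedCone.hull ℝ {relEval φ S w v} :=
  relEval_mem_normalCone_sup.2 ⟨1, zero_le_one, by simp [mem_face]⟩

lemma relEval_ne_zero (hv : Set.InjOn (φ · v) (S : Set P)) (hw : w ∈ S) (hS : 1 < S.card) :
    relEval φ S w v ≠ 0 := fun h => by
  obtain ⟨β, hβ, hne⟩ := Finset.exists_mem_ne hS w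
  exact hne (hv hβ hw (sub_eq_zero.1 (congrFun h ⟨β, hβ⟩)))

lemma IsMonotoneAlong.exists_mem_normalCone_sup_iff {b : P → ℤ} (h : IsMonotoneAlong φ S b v)
    (k : ℤ) : (∃ α : S, k < b α ∧
      relEval φ S w y ∈ normalCone φ S w α ⊔ PointedCone.hull ℝ {relEval φ S w v}) ↔
      ∃ α ∈ face φ S y, k < b α := by
  constructor
  · rintro ⟨α, hα, hmem⟩
    obtain ⟨t, ht, hαt⟩ := relEval_mem_normalCone_sup.1 hmem
    obtain ⟨γ, hγ, hle⟩ := h.exists_le _ t ht _ hαt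
    exact ⟨γ, by simpa using hγ, hα.trans_le hle⟩
  · rintro ⟨α, hα, hlt⟩
    have hα0 : α ∈ face φ S (y - (0 : ℝ) • v) := by simpa using hα
    exact ⟨⟨α, face_subset hα⟩, hlt,
      relEval_mem_normalCone_sup (α := ⟨α, face_subset hα⟩).2 ⟨0, le_rfl, hα0⟩⟩

end NormalCone

/-! ### Weights that cancel on every simplex of a pulling triangulation -/

section Balanced

variable {I P G E : Type*} [AddCommGroup G] [AddCommGroup E] [Module ℝ E]
  {φ : P → Module.Dual ℝ E} {l : I → P → ℤ} {μ : I → G} {S T : Finset P} {w : P}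

variable (φ l S) in
/-- Any two of the labellings `l i` agree on `S`, or differ by a labelling that is monotone along
some direction. -/
def PairwiseMonotone : Prop :=
  ∀ i j, (∀ α ∈ S, l i α = l j α) ∨ ∃ v, IsMonotoneAlong φ S (l i - l j) v

lemma PairwiseMonotone.restrict_face (h : PairwiseMonotone φ l S) (y : E) :
    PairwiseMonotone φ l (face φ S y) := fun i j =>
  (h i j).imp (fun h α hα => h α (face_subset hα)) fun ⟨v, hv⟩ => ⟨v, hv.restrict_face y⟩

variable [Fintype I]

open scoped Classical in
variable (l μ T) in
/-- The weights `μ` of the labellings `l i` cancel on `T`: those of the labellings with any given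
restriction to `T` add up to zero. -/
def IsBalanced : Prop := ∀ x : T → ℤ, ∑ i with T.restrict (l i) = x, μ i = 0

lemma IsBalanced.sum_eq_zero (h : IsBalanced l μ T) {Q : I → Prop} [DecidablePred Q]
    (hQ : ∀ i j, (∀ α ∈ T, l i α = l j α) → Q i → Q j) : ∑ i with Q i, μ i = 0 := by
  classical
  exact sum_filter_eq_zero_of_fibers (r := fun i => T.restrict (l i))
    (fun i j hij => hQ i j fun α hα => congrFun hij ⟨α, hα⟩) fun k _ => h _

lemma sum_subtype_filter_eq_sum_filter_and (p q : I → Prop) [DecidablePred p] [DecidablePred q]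
    (f : I → G) : ∑ i : {i // p i} with q i.1, f i = ∑ i with p i ∧ q i, f i := by
  rw [← Finset.filter_filter, Finset.sum_filter, Finset.sum_filter,
    ← Finset.sum_subtype _ (fun _ => Finset.mem_filter_univ _) fun i => if q i then f i else 0]

lemma IsBalanced.slice [DecidableEq P] (h : IsBalanced l μ (insert w T)) (c : ℤ) :
    IsBalanced (fun i : {i // l i w = c} => l i) (fun i => μ i) T := by
  classical
  intro x
  rw [sum_subtype_filter_eq_sum_filter_and (fun i => l i w = c) (fun i => T.restrict (l i) = x)]
  refine h.sum_eq_zero fun i j hij hi => ⟨hij w (by simp) ▸ hi.1, hi.2 ▸ funext fun α => ?_⟩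
  exact (hij α (by simp)).symm

lemma isBalanced_of_slice (hw : w ∈ T)
    (h : ∀ c, IsBalanced (fun i : {i // l i w = c} => l i) (fun i => μ i) T) :
    IsBalanced l μ T := by
  classical
  intro x
  rw [← h (x ⟨w, hw⟩) x, sum_subtype_filter_eq_sum_filter_and (fun i => l i w = x ⟨w, hw⟩)
    fun i => T.restrict (l i) = x]
  congr 1 with i
  simpa using fun hi : T.restrict (l i) = x => congrFun hi ⟨w, hw⟩

lemma sum_exists_lt_eq_zero (hS : InConvexPosition φ S) (hw : w ∈ S) (hcard : 1 < S.card)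
    (hpair : PairwiseMonotone φ l S) (hlw : ∀ i j, l i w = l j w)
    (hface : ∀ y, face φ S y ≠ S → IsBalanced l μ (face φ S y)) (j : I) :
    ∑ i with ∃ α ∈ S, l j α < l i α, μ i = 0 := by
  classical
  have hmono : ∀ i, ∃ v, (∃ α ∈ S, l j α < l i α) → IsMonotoneAlong φ S (l i - l j) v := by
    intro i
    obtain h | ⟨v, hv⟩ := hpair i j
    · exact ⟨0, fun ⟨α, hα, hlt⟩ => absurd (h α hα) hlt.ne'⟩
    · exact ⟨v, fun _ => hv⟩
  choose v hv using hmono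
  let Q : I → Finset S := fun i => {α | l j α < l i α}
  have hQ : ∀ i, (Q i).Nonempty ↔ ∃ α ∈ S, l j α < l i α := by simp [Q, Finset.Nonempty]
  have hmem : ∀ i, ∀ α ∈ Q i, l j α < l i α := by simp [Q]
  have hlow : ∀ i, ∀ α ∈ Q i, ∃ γ ∈ S, φ γ (v i) < φ α (v i) := fun i α hα =>
    (hv i ⟨α, α.2, hmem i α hα⟩).exists_apply_lt hS hw α.2 (by simp [hlw i j, hmem i α hα])
  have hunion := sum_nonempty_eq_zero_of_union (μ := μ) (P := Q)
    (C := fun i α => normalCone φ S w α ⊔ PointedCone.hull ℝ {relEval φ S w (v i)})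
    (fun i α hα => isClosed_normalCone_sup (hlow i α hα))
    (fun i α hα => salient_normalCone_sup hw (hlow i α hα))
    (fun i hi => ⟨_, relEval_ne_zero (hv i ((hQ i).1 hi)).injOn hw hcard,
      fun α _ => relEval_self_mem_normalCone_sup⟩) fun z hz => ?_
  · simpa only [hQ] using hunion
  by_cases hzr : z ∈ LinearMap.range (relEval φ S w)
  · obtain ⟨y, rfl⟩ := hzr
    have hiff : ∀ i, (∃ α ∈ Q i,
        relEval φ S w y ∈ normalCone φ S w α ⊔ PointedCone.hull ℝ {relEval φ S w (v i)}) ↔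
        ∃ α ∈ face φ S y, l j α < l i α := by
      intro i
      by_cases hi : ∃ α ∈ S, l j α < l i α
      · simpa [Q] using (hv i hi).exists_mem_normalCone_sup_iff (w := w) (y := y) 0
      · have hi' : ¬ (Q i).Nonempty := (hQ i).not.2 hi
        exact iff_of_false (fun ⟨α, hα, _⟩ => hi' ⟨α, hα⟩)
          fun ⟨α, hα, hlt⟩ => hi ⟨α, face_subset hα, hlt⟩
    simp only [hiff]
    exact (hface y fun h => hz (relEval_eq_zero hw h)).sum_eq_zero
      fun i k hik ⟨α, hα, hlt⟩ => ⟨α, hα, hik α hα ▸ hlt⟩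
  · refine Finset.sum_eq_zero fun i hi => absurd ?_ hzr
    obtain ⟨α, -, hα⟩ := (Finset.mem_filter.1 hi).2
    exact mem_range_of_mem_normalCone_sup hα

lemma isBalanced_of_isBalanced_face (hS : InConvexPosition φ S) (hw : w ∈ S) (hcard : 1 < S.card)
    (hpair : PairwiseMonotone φ l S) (hlw : ∀ i j, l i w = l j w)
    (hface : ∀ y, face φ S y ≠ S → IsBalanced l μ (face φ S y)) : IsBalanced l μ S := by
  classical
  obtain ⟨y, hy⟩ := hS w hw
  have htotal : ∑ i, μ i = 0 := by
    have hne : face φ S y ≠ S := fun h =>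
      hcard.ne' (by rw [h.symm.trans hy, Finset.card_singleton])
    simpa using (hface y hne).sum_eq_zero (Q := fun _ => True) fun _ _ _ => id
  refine sum_filter_eq_eq_zero_of_sum_filter_le (r := fun i => S.restrict (l i)) fun j => ?_
  have hsplit := Finset.sum_filter_add_sum_filter_not Finset.univ
    (fun i => ∃ α ∈ S, l j α < l i α) μ
  rw [htotal, sum_exists_lt_eq_zero hS hw hcard hpair hlw hface j, zero_add] at hsplit
  rw [← hsplit]
  congr 1 with i
  simp [Pi.le_def]

variable [DecidableEq P]

variable (φ) in
/-- `IsPullingSimplex φ b S σ`: `σ` is a simplex of the pulling triangulation of `S` with respect to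
the choice `b` of a vertex of every face. A face with more than one vertex is triangulated by the
cones with apex `b S` over the triangulations of its proper faces. Simplices over faces through the
apex and faces of lower dimension are allowed too; they are degenerate. -/
inductive IsPullingSimplex (b : Finset P → P) : Finset P → Finset P → Prop
  | single {S : Finset P} (_ : S.card ≤ 1) : IsPullingSimplex b S S
  | cone {S σ : Finset P} (y : E) (_ : 1 < S.card) (_ : face φ S y ≠ S)
      (_ : IsPullingSimplex b (face φ S y) σ) : IsPullingSimplex b S (insert (b S) σ)

variable {b : Finset P → P}

lemma IsPullingSimplex.subset (hb : ∀ S : Finset P, S.Nonempty → b S ∈ S) {σ : Finset P}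
    (h : IsPullingSimplex φ b S σ) : σ ⊆ S := by
  induction h with
  | single => rfl
  | cone y hS _ _ ih =>
    exact Finset.insert_subset (hb _ (Finset.card_pos.1 (zero_lt_one.trans hS)))
      (ih.trans face_subset)

theorem isBalanced_of_isPullingSimplex (hb : ∀ S : Finset P, S.Nonempty → b S ∈ S)
    (hne : S.Nonempty) (hS : InConvexPosition φ S) (hpair : PairwiseMonotone φ l S)
    (hsimplex : ∀ σ, IsPullingSimplex φ b S σ → IsBalanced l μ σ) : IsBalanced l μ S := by
  induction hn : S.card using Nat.strong_induction_on generalizing S I with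
  | _ n ih =>
    obtain hcard | hcard := le_or_gt S.card 1
    · exact hsimplex S (.single hcard)
    refine isBalanced_of_slice (hb S hne) fun c => isBalanced_of_isBalanced_face hS (hb S hne)
      hcard (fun i j => hpair i j) (fun i j => i.2.trans j.2.symm) fun y hy => ?_
    exact ih _ (hn ▸ card_face_lt_card hy) (face_nonempty hne y) (hS.restrict_face y)
      (fun i j => PairwiseMonotone.restrict_face hpair y i j)
      (fun σ hσ => (hsimplex _ (.cone y hcard hy hσ)).slice c) rfl

open scoped Classical in
variable (φ S) in
/-- The finite set of all simplices `σ` with `IsPullingSimplex φ b S σ`. -/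
noncomputable def pullingSimplices (b : Finset P → P) : Finset (Finset P) :=
  {σ ∈ S.powerset | IsPullingSimplex φ b S σ}

lemma mem_pullingSimplices (hb : ∀ S : Finset P, S.Nonempty → b S ∈ S) {σ : Finset P} :
    σ ∈ pullingSimplices φ S b ↔ IsPullingSimplex φ b S σ := by
  simpa [pullingSimplices] using fun h => h.subset hb

/- The number of labellings is the dimension of the space of real weights, and the sums over the
classes of labellings with the same restriction to a simplex separate these weights. -/
theorem card_le_sum_card_image_restrict (hb : ∀ S : Finset P, S.Nonempty → b S ∈ S)
    (hne : S.Nonempty) (hS : InConvexPosition φ S) (hpair : PairwiseMonotone φ l S)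
    (hinj : ∀ i j, (∀ α ∈ S, l i α = l j α) → i = j) :
    Fintype.card I ≤ ∑ σ ∈ pullingSimplices φ S b,
      (Finset.univ.image fun i => σ.restrict (l i)).card := by
  classical
  let X := Σ σ : pullingSimplices φ S b, Finset.univ.image fun i => σ.1.restrict (l i)
  let Φ : (I → ℝ) →ₗ[ℝ] (X → ℝ) := LinearMap.pi fun x =>
    ∑ i with x.1.1.restrict (l i) = x.2, LinearMap.proj i
  have hΦ : Function.Injective Φ := by
    refine (injective_iff_map_eq_zero Φ).2 fun μ hμ => funext fun i => ?_
    have hbal : IsBalanced l μ S := isBalanced_of_isPullingSimplex hb hne hS hpair fun σ hσ x => by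
      by_cases hx : x ∈ Finset.univ.image fun i => σ.restrict (l i)
      · simpa [Φ] using congrFun hμ ⟨⟨σ, (mem_pullingSimplices hb).2 hσ⟩, ⟨x, hx⟩⟩
      · exact Finset.sum_eq_zero fun i hi =>
          absurd (Finset.mem_image.2 ⟨i, Finset.mem_univ i, (Finset.mem_filter.1 hi).2⟩) hx
    have hfiber : (Finset.univ.filter fun j => S.restrict (l j) = S.restrict (l i)) = {i} := by
      ext j
      simpa using ⟨fun h => hinj j i fun α hα => congrFun h ⟨α, hα⟩, fun h => h ▸ rfl⟩
    simpa [hfiber] using hbal (S.restrict (l i))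
  have hcard := LinearMap.finrank_le_finrank_of_injective hΦ
  rw [Module.finrank_fintype_fun_eq_card, Module.finrank_fintype_fun_eq_card,
    Fintype.card_sigma] at hcard
  simpa only [Fintype.card_coe, Finset.sum_coe_sort (pullingSimplices φ S b) fun σ =>
    (Finset.univ.image fun i => σ.restrict (l i)).card] using hcard

end Balanced

/-! ### Full-dimensional simplices of a pulling triangulation -/

section PullingTriangulation

variable {P E : Type*} [AddCommGroup E] [Module ℝ E] {φ : P → Module.Dual ℝ E}
  {S σ τ : Finset P} {w α : P} {y y' : E}

variable (φ) in
/-- The functional `φ α`, lifted to height one: affine relations between functionals become linear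
relations. -/
def homogenize (α : P) : ℝ × Module.Dual ℝ E := (1, φ α)

variable (φ S) in
/-- The linear span of the homogenised functionals in `S`. -/
def homSpan : Submodule ℝ (ℝ × Module.Dual ℝ E) := Submodule.span ℝ (homogenize φ '' S)

lemma homogenize_mem_homSpan (hα : α ∈ S) : homogenize φ α ∈ homSpan φ S :=
  Submodule.subset_span ⟨α, hα, rfl⟩

lemma homSpan_mono (h : S ⊆ σ) : homSpan φ S ≤ homSpan φ σ :=
  Submodule.span_mono (Set.image_mono h)

lemma homSpan_le_iff {W : Submodule ℝ (ℝ × Module.Dual ℝ E)} :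
    homSpan φ S ≤ W ↔ ∀ α ∈ S, homogenize φ α ∈ W := by
  simp [homSpan, Submodule.span_le, Set.subset_def]

lemma exists_face_supporting (hS : S.Nonempty) (y : E) :
    ∃ g : ℝ × Module.Dual ℝ E →ₗ[ℝ] ℝ, ∀ α ∈ S,
      g (homogenize φ α) ≤ 0 ∧ (g (homogenize φ α) = 0 ↔ α ∈ face φ S y) := by
  obtain ⟨β, hβ⟩ := face_nonempty (φ := φ) hS y
  have hmax := (mem_face.1 hβ).2
  let g : ℝ × Module.Dual ℝ E →ₗ[ℝ] ℝ :=
    (Module.Dual.eval ℝ E y).comp (LinearMap.snd ℝ ℝ _) - φ β y • LinearMap.fst ℝ ℝ _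
  refine ⟨g, fun α hα => ?_⟩
  have hg : g (homogenize φ α) = φ α y - φ β y := by simp [g, homogenize]
  rw [hg, sub_nonpos, sub_eq_zero]
  exact ⟨hmax α hα, fun h => mem_face.2 ⟨hα, h ▸ hmax⟩, fun h => apply_eq_of_mem_face h hβ⟩

lemma homSpan_face_le_ker {g : ℝ × Module.Dual ℝ E →ₗ[ℝ] ℝ}
    (hg : ∀ α ∈ S, g (homogenize φ α) ≤ 0 ∧ (g (homogenize φ α) = 0 ↔ α ∈ face φ S y)) :
    homSpan φ (face φ S y) ≤ LinearMap.ker g :=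
  homSpan_le_iff.2 fun α hα => (hg α (face_subset hα)).2.2 hα

lemma homogenize_mem_homSpan_face_iff (hα : α ∈ S) :
    homogenize φ α ∈ homSpan φ (face φ S y) ↔ α ∈ face φ S y := by
  refine ⟨fun h => ?_, homogenize_mem_homSpan⟩
  obtain ⟨g, hg⟩ := exists_face_supporting (φ := φ) ⟨α, hα⟩ y
  exact (hg α hα).2.1 (homSpan_face_le_ker hg h)

/- The point on both sides is a combination of `w` and a point of `conv σ`, respectively of the
face; a supporting functional of the face compares the weights of `w`. -/
lemma subset_face_of_sum_smul_homogenize_eq (hw : w ∈ S) (hwy : w ∉ face φ S y) (hσ : σ ⊆ S)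
    (hτ : τ ⊆ face φ S y) {a b : P → ℝ} (ha : ∀ α ∈ σ, 0 < a α) {s t : ℝ} (hst : t ≤ s)
    (h : s • homogenize φ w + ∑ α ∈ σ, a α • homogenize φ α =
      t • homogenize φ w + ∑ α ∈ τ, b α • homogenize φ α) :
    s = t ∧ σ ⊆ face φ S y := by
  obtain ⟨g, hg⟩ := exists_face_supporting (φ := φ) ⟨w, hw⟩ y
  have hgw : g (homogenize φ w) < 0 := (hg w hw).1.lt_of_ne fun h => hwy ((hg w hw).2.1 h)
  have hgτ : g (∑ α ∈ τ, b α • homogenize φ α) = 0 := homSpan_face_le_ker hg <|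
    Submodule.sum_mem _ fun α hα => Submodule.smul_mem _ _ (homogenize_mem_homSpan (hτ hα))
  have hterm : ∀ α ∈ σ, a α * g (homogenize φ α) ≤ 0 := fun α hα =>
    mul_nonpos_of_nonneg_of_nonpos (ha α hα).le (hg α (hσ hα)).1
  have hsum := Finset.sum_nonpos hterm
  have hgh := congrArg g h
  rw [map_add, map_add, hgτ, map_smul, map_smul, map_sum] at hgh
  simp only [map_smul, smul_eq_mul, add_zero] at hgh
  have heq : s = t := hst.antisymm' ((mul_le_mul_right_of_neg hgw).1 (by linarith))
  refine ⟨heq, fun α hα => (hg α (hσ hα)).2.1 ?_⟩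
  have hzero : ∑ α ∈ σ, a α * g (homogenize φ α) = 0 := by rw [heq] at hgh; linarith
  exact (mul_eq_zero.1 ((Finset.sum_eq_zero_iff_of_nonpos hterm).1 hzero α hα)).resolve_left
    (ha α hα).ne'

lemma finrank_homSpan_face_lt (hy : face φ S y ≠ S) :
    Module.finrank ℝ (homSpan φ (face φ S y)) < Module.finrank ℝ (homSpan φ S) := by
  have : FiniteDimensional ℝ (homSpan φ S) :=
    FiniteDimensional.span_of_finite ℝ (S.finite_toSet.image _)
  refine Submodule.finrank_lt_finrank_of_lt ((homSpan_mono face_subset).lt_of_not_ge fun hle => ?_)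
  exact hy <| face_subset.antisymm fun _ hα =>
    (homogenize_mem_homSpan_face_iff hα).1 (hle (homogenize_mem_homSpan hα))

variable [DecidableEq P]

lemma notMem_face_of_homSpan_le (hy : face φ S y ≠ S) (hσ : σ ⊆ face φ S y)
    (hspan : homSpan φ S ≤ homSpan φ (insert w σ)) : w ∉ face φ S y := fun hwy =>
  hy <| face_subset.antisymm fun _ hα => (homogenize_mem_homSpan_face_iff hα).1 <|
    homSpan_mono (Finset.insert_subset hwy hσ) (hspan (homogenize_mem_homSpan hα))

lemma homSpan_face_le_of_homSpan_le (hw : w ∈ S) (hwy : w ∉ face φ S y) (hσ : σ ⊆ face φ S y)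
    (hspan : homSpan φ S ≤ homSpan φ (insert w σ)) :
    homSpan φ (face φ S y) ≤ homSpan φ σ := by
  refine homSpan_le_iff.2 fun α hα => ?_
  obtain ⟨g, hg⟩ := exists_face_supporting (φ := φ) ⟨w, hw⟩ y
  have hαspan := hspan (homogenize_mem_homSpan (face_subset hα))
  rw [homSpan, Finset.coe_insert, Set.image_insert_eq, Submodule.mem_span_insert] at hαspan
  obtain ⟨c, u, hu, hcu⟩ := hαspan
  have hgu : g u = 0 := homSpan_face_le_ker hg (homSpan_mono hσ hu)
  have hgc := congrArg g hcu
  rw [(hg α (face_subset hα)).2.2 hα, map_add, map_smul, hgu, add_zero, smul_eq_mul,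
    zero_eq_mul, (hg w hw).2, or_iff_left hwy] at hgc
  rw [hcu, hgc, zero_smul, zero_add]
  exact hu

lemma face_eq_face_of_homSpan_le (hw : w ∈ S) (hwy : w ∉ face φ S y) (hwy' : w ∉ face φ S y')
    (hσ : σ ⊆ face φ S y) (hσ' : σ ⊆ face φ S y')
    (hspan : homSpan φ S ≤ homSpan φ (insert w σ)) : face φ S y = face φ S y' := by
  have hle : ∀ {y y'}, w ∉ face φ S y → σ ⊆ face φ S y → σ ⊆ face φ S y' →
      face φ S y ⊆ face φ S y' := fun hwy hσ hσ' α hα =>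
    (homogenize_mem_homSpan_face_iff (face_subset hα)).1 <| homSpan_mono hσ' <|
      homSpan_face_le_of_homSpan_le hw hwy hσ hspan (homogenize_mem_homSpan hα)
  exact (hle hwy hσ hσ').antisymm (hle hwy' hσ' hσ)

variable {b : Finset P → P}

lemma IsPullingSimplex.card_le_finrank_homSpan (h : IsPullingSimplex φ b S σ) :
    σ.card ≤ Module.finrank ℝ (homSpan φ S) := by
  induction h with
  | @single S hS =>
    obtain rfl | ⟨α, hα⟩ := S.eq_empty_or_nonempty
    · exact Nat.zero_le _
    · have : FiniteDimensional ℝ (homSpan φ S) :=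
        FiniteDimensional.span_of_finite ℝ (S.finite_toSet.image _)
      have : Nontrivial (homSpan φ S) :=
        ⟨⟨_, homogenize_mem_homSpan hα⟩, 0, fun h => one_ne_zero (congrArg (·.1.1) h)⟩
      exact hS.trans (Module.finrank_pos (R := ℝ) (M := homSpan φ S))
  | cone y _ hy _ ih =>
    exact (Finset.card_insert_le _ _).trans (ih.trans_lt (finrank_homSpan_face_lt hy))

theorem IsPullingSimplex.eq_of_sum_smul_homogenize_eq
    (hb : ∀ S : Finset P, S.Nonempty → b S ∈ S)
    (hσ : IsPullingSimplex φ b S σ) (hτ : IsPullingSimplex φ b S τ)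
    (hσspan : homSpan φ S ≤ homSpan φ σ) (hτspan : homSpan φ S ≤ homSpan φ τ) {a c : P → ℝ}
    (ha : ∀ α ∈ σ, 0 < a α) (hc : ∀ α ∈ τ, 0 < c α)
    (h : ∑ α ∈ σ, a α • homogenize φ α = ∑ α ∈ τ, c α • homogenize φ α) : σ = τ := by
  induction hσ generalizing τ with
  | single hS =>
    cases hτ with
    | single => rfl
    | cone _ hS' => exact absurd hS' hS.not_gt
  | @cone S σ y hS hy hσ ih =>
    cases hτ with
    | single hS' => exact absurd hS hS'.not_gt
    | @cone _ τ y' _ hy' hτ =>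
      have hw := hb S (Finset.card_pos.1 (zero_lt_one.trans hS))
      have hwy := notMem_face_of_homSpan_le hy (hσ.subset hb) hσspan
      have hwy' := notMem_face_of_homSpan_le hy' (hτ.subset hb) hτspan
      rw [Finset.sum_insert fun hwσ => hwy (hσ.subset hb hwσ),
        Finset.sum_insert fun hwτ => hwy' (hτ.subset hb hwτ)] at h
      rw [Finset.forall_mem_insert] at ha hc
      have hmain : a (b S) = c (b S) ∧ face φ S y = face φ S y' := by
        obtain hle | hle := le_total (c (b S)) (a (b S))
        · exact (subset_face_of_sum_smul_homogenize_eq hw hwy' ((hσ.subset hb).trans face_subset)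
            (hτ.subset hb) ha.2 hle h).imp_right fun hsub =>
              face_eq_face_of_homSpan_le hw hwy hwy' (hσ.subset hb) hsub hσspan
        · exact (subset_face_of_sum_smul_homogenize_eq hw hwy ((hτ.subset hb).trans face_subset)
            (hσ.subset hb) hc.2 hle h.symm).imp Eq.symm fun hsub =>
              face_eq_face_of_homSpan_le hw hwy hwy' hsub (hτ.subset hb) hτspan
      obtain ⟨hcoeff, hface⟩ := hmain
      rw [hcoeff, add_left_cancel_iff] at h
      rw [← hface] at hτ hwy'
      rw [ih hτ (homSpan_face_le_of_homSpan_le hw hwy (hσ.subset hb) hσspan)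
        (homSpan_face_le_of_homSpan_le hw hwy' (hτ.subset hb) hτspan) ha.2 hc.2 h]

end PullingTriangulation

/-! ### Counting the translates of a finite set of labellings -/

section LatticeCounting

variable {I X Y m : Type*} [Fintype I] [Fintype m]

open scoped Classical in
/-- The finite set of all points `τ i + M w`, where `i : I` and `w` is an integer vector in the box
`[0, k)ᵐ`. -/
noncomputable def boxTranslates (τ : I → X → ℤ) (M : Matrix X m ℤ) (k : ℕ) : Finset (X → ℤ) :=
  Finset.univ.image fun p : I × (m → Fin k) => τ p.1 + M.mulVec fun j => (p.2 j : ℤ)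

variable {τ : I → X → ℤ} {M : Matrix X m ℤ} {k : ℕ}

lemma mem_boxTranslates {x : X → ℤ} :
    x ∈ boxTranslates τ M k ↔ ∃ i, ∃ w : m → Fin k, τ i + M.mulVec (fun j => (w j : ℤ)) = x := by
  simp [boxTranslates]

lemma card_boxTranslates_le_submatrix (e : Y ≃ X) :
    (boxTranslates τ M k).card ≤ (boxTranslates (fun i => τ i ∘ e) (M.submatrix e id) k).card := by
  refine Finset.card_le_card_of_injOn (· ∘ e) (fun x hx => ?_)
    (e.surjective.injective_comp_right.injOn)
  obtain ⟨i, w, rfl⟩ := mem_boxTranslates.1 hx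
  exact mem_boxTranslates.2 ⟨i, w, rfl⟩

lemma exists_finset_card_le_natAbs_det_forall_exists_add_mulVec [DecidableEq m]
    (M : Matrix m m ℤ) (hM : M.det ≠ 0) :
    ∃ R : Finset (m → ℤ), R.card ≤ M.det.natAbs ∧ ∀ x, ∃ r ∈ R, ∃ w, x = r + M.mulVec w := by
  classical
  have hinj : Function.Injective M.mulVecLin := (injective_iff_map_eq_zero _).2 fun w hw =>
    by_contra fun hne => hM (Matrix.exists_mulVec_eq_zero_iff.1 ⟨w, hne, hw⟩)
  let L : Submodule ℤ (m → ℤ) := LinearMap.range M.mulVecLin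
  have hindex : Nat.card ((m → ℤ) ⧸ L) = M.det.natAbs := by
    rw [← Submodule.natAbs_det_equiv L (LinearEquiv.ofInjective M.mulVecLin hinj),
      ← LinearMap.det_toLin']
    rfl
  have : Finite ((m → ℤ) ⧸ L) := Nat.finite_of_card_ne_zero <| by simpa [hindex] using hM
  have := Fintype.ofFinite ((m → ℤ) ⧸ L)
  refine ⟨Finset.univ.image (Quotient.out : (m → ℤ) ⧸ L → m → ℤ), ?_, fun x => ?_⟩
  · rw [← hindex, Nat.card_eq_fintype_card]
    exact Finset.card_image_le
  · obtain ⟨w, hw⟩ : x - (Submodule.Quotient.mk (p := L) x).out ∈ L :=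
      (Submodule.Quotient.eq L).1 (Quotient.out_eq _).symm
    exact ⟨_, Finset.mem_image_of_mem _ (Finset.mem_univ (Submodule.Quotient.mk x)), w,
      by rw [← Matrix.mulVecLin_apply, hw, add_sub_cancel]⟩

lemma exists_forall_abs_le {ι : Type*} [Finite ι] (u : ι → ℤ) : ∃ K : ℕ, ∀ i, |u i| ≤ K := by
  obtain ⟨K, hK⟩ := (Set.finite_range fun i => (u i).natAbs).bddAbove
  exact ⟨K, fun i => Int.abs_eq_natAbs (u i) ▸ Int.ofNat_le.2 (hK ⟨i, rfl⟩)⟩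

lemma exists_card_boxTranslates_le_natAbs_det [DecidableEq m] (τ : I → m → ℤ) {M : Matrix m m ℤ}
    (hM : M.det ≠ 0) :
    ∃ C : ℕ, ∀ k, (boxTranslates τ M k).card ≤ M.det.natAbs * (k + C) ^ Fintype.card m := by
  classical
  obtain ⟨R, hcard, hR⟩ := exists_finset_card_le_natAbs_det_forall_exists_add_mulVec M hM
  choose r hr u hu using fun i => hR (τ i)
  obtain ⟨K, hK⟩ := exists_forall_abs_le fun p : I × m => u p.1 p.2
  refine ⟨2 * K, fun k => ?_⟩
  let box : Finset (m → ℤ) := Fintype.piFinset fun _ => Finset.Ico (-K : ℤ) (k + K)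
  have hsub : boxTranslates τ M k ⊆ (R ×ˢ box).image fun p => p.1 + M.mulVec p.2 := by
    intro x hx
    obtain ⟨i, w, rfl⟩ := mem_boxTranslates.1 hx
    refine Finset.mem_image.2 ⟨(r i, u i + fun j => (w j : ℤ)), Finset.mem_product.2 ⟨hr i, ?_⟩, ?_⟩
    · refine Fintype.mem_piFinset.2 fun j => Finset.mem_Ico.2 ?_
      have : -(K : ℤ) ≤ u i j ∧ u i j ≤ K := abs_le.1 (hK (i, j))
      have := (w j).2
      simp only [Pi.add_apply]
      omega
    · rw [hu i, Matrix.mulVec_add, add_assoc]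
  have hbox : box.card = (k + 2 * K) ^ Fintype.card m := by
    rw [Fintype.card_piFinset, Finset.prod_const, Finset.card_univ, Int.card_Ico]
    congr 1
    omega
  calc (boxTranslates τ M k).card ≤ R.card * box.card :=
        (Finset.card_le_card hsub).trans (Finset.card_image_le.trans (Finset.card_product _ _).le)
    _ ≤ M.det.natAbs * (k + 2 * K) ^ Fintype.card m := hbox ▸ Nat.mul_le_mul_right _ hcard

/- Every fibre over the box `[0, k)ᵐ` can be moved along `κ`, so it contains at least `k` points of
a box of side `C * k`. -/
lemma exists_card_boxTranslates_mul_le {κ : m → ℤ} (τ : I → X → ℤ) (hκ : κ ≠ 0)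
    (hM : M.mulVec κ = 0) :
    ∃ C : ℕ, ∀ k, (boxTranslates τ M k).card * k ≤
      Fintype.card I * (C * k) ^ Fintype.card m := by
  classical
  obtain ⟨K, hK⟩ := exists_forall_abs_le κ
  refine ⟨2 * K + 1, fun k => ?_⟩
  let box : Finset (m → ℤ) := Fintype.piFinset fun _ => Finset.Ico (-(K * k) : ℤ) (K * k + k)
  have hbox : box.card = ((2 * K + 1) * k) ^ Fintype.card m := by
    rw [Fintype.card_piFinset, Finset.prod_const, Finset.card_univ, Int.card_Ico]
    congr 1
    zify
    rw [sub_neg_eq_add, Int.toNat_of_nonneg (by positivity)]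
    ring
  choose i w hw using fun x : boxTranslates τ M k => mem_boxTranslates.1 x.2
  have hmem : ∀ (x : boxTranslates τ M k) (t : Fin k),
      (fun j => (w x j : ℤ)) + (t : ℤ) • κ ∈ box := fun x t => by
    refine Fintype.mem_piFinset.2 fun j => Finset.mem_Ico.2 ?_
    have hbound : |(t : ℤ) * κ j| ≤ K * k := by
      rw [abs_mul, mul_comm, Nat.abs_cast]
      exact mul_le_mul (hK j) (by exact_mod_cast t.2.le) (by positivity) (by positivity)
    have := abs_le.1 hbound
    have := (w x j).2
    simp only [Pi.add_apply, Pi.smul_apply, smul_eq_mul]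
    omega
  let f : boxTranslates τ M k × Fin k → I × box := fun p => (i p.1, ⟨_, hmem p.1 p.2⟩)
  have hf : Function.Injective f := by
    rintro ⟨x, t⟩ ⟨x', t'⟩ heq
    obtain ⟨hi, hv⟩ := Prod.mk.inj heq
    rw [Subtype.mk.injEq] at hv
    have hx : x = x' := by
      refine Subtype.ext ?_
      rw [← hw x, ← hw x', hi, add_right_inj]
      simpa only [Matrix.mulVec_add, Matrix.mulVec_smul, hM, smul_zero, add_zero] using
        congrArg M.mulVec hv
    subst hx
    rw [add_right_inj] at hv
    exact Prod.ext rfl (Fin.ext (by exact_mod_cast smul_left_injective ℤ hκ hv))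
  simpa [hbox] using Fintype.card_le_of_injective f hf

end LatticeCounting

/-- The homogeneous coordinates `(1, α)` of a lattice point `α`. -/
def homRow {n : ℕ} (α : Fin n → ℤ) : Fin (n + 1) → ℤ := Fin.cons 1 α

/-- The matrix whose rows are the homogeneous coordinates of the points of `σ`. -/
def homMatrix {n : ℕ} (σ : Finset (Fin n → ℤ)) : Matrix σ (Fin (n + 1)) ℤ :=
  Matrix.of fun α => homRow α.1

/-- The normalised volume of the simplex with vertex set `σ`, that is `n!` times its Lebesgue
measure. It is set to `0` unless `σ` has `n + 1` points. -/
noncomputable def normalizedVolume {n : ℕ} (σ : Finset (Fin n → ℤ)) : ℕ :=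
  if h : σ.card = n + 1 then
    ((homMatrix σ).submatrix (σ.equivFinOfCardEq h).symm id).det.natAbs
  else 0

/-- A lattice point, viewed as a point of `ℝⁿ`. -/
def realPoint {n : ℕ} (α : Fin n → ℤ) : Fin n → ℝ := fun j => α j

/-- The functional `y ↦ ⟨α, y⟩` on `ℝⁿ` defined by a lattice point `α`. -/
def pairing {n : ℕ} (α : Fin n → ℤ) : Module.Dual ℝ (Fin n → ℝ) :=
  dotProductEquiv ℝ (Fin n) (realPoint α)

/-- The labellings `α ↦ τ i α + c + ⟨α, w⟩`, indexed by `i` and the vector `(c, w)`. -/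
def translates {I : Type*} {n : ℕ} (τ : I → (Fin n → ℤ) → ℤ) (p : I × (Fin (n + 1) → ℤ))
    (α : Fin n → ℤ) : ℤ :=
  τ p.1 α + homRow α ⬝ᵥ p.2

section NormalizedVolume

variable {I : Type*} [Fintype I] {n : ℕ} {σ S : Finset (Fin n → ℤ)}

lemma exists_equiv_of_normalizedVolume_ne_zero (h : normalizedVolume σ ≠ 0) :
    ∃ e : Fin (n + 1) ≃ σ,
      normalizedVolume σ = ((homMatrix σ).submatrix e id).det.natAbs := by
  unfold normalizedVolume at h ⊢
  split_ifs at h ⊢ with hcard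
  · exact ⟨_, rfl⟩
  · exact absurd rfl h

lemma exists_homMatrix_mulVec_eq_zero (hσ : σ.card ≤ n + 1) (h : normalizedVolume σ = 0) :
    ∃ κ ≠ 0, (homMatrix σ).mulVec κ = 0 := by
  obtain hlt | hcard := hσ.lt_or_eq
  · by_contra! hne
    have hinj : Function.Injective (homMatrix σ).mulVecLin :=
      (injective_iff_map_eq_zero _).2 fun w hw => by_contra fun hw0 => hne w hw0 hw
    have := LinearMap.finrank_le_finrank_of_injective hinj
    simp only [Module.finrank_fintype_fun_eq_card, Fintype.card_fin, Fintype.card_coe] at this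
    exact this.not_gt hlt
  · rw [normalizedVolume, dif_pos hcard, Int.natAbs_eq_zero] at h
    obtain ⟨κ, hκ, hzero⟩ := Matrix.exists_mulVec_eq_zero_iff.2 h
    refine ⟨κ, hκ, funext fun α => ?_⟩
    simpa [Matrix.mulVec] using congrFun hzero (σ.equivFinOfCardEq hcard α)

lemma exists_tendsto_card_boxTranslates_le (τ : I → (Fin n → ℤ) → ℤ) (hσ : σ.card ≤ n + 1) :
    ∃ u : ℕ → ℝ, Tendsto u atTop (𝓝 (normalizedVolume σ)) ∧ ∀ k ≠ 0,
      (boxTranslates (fun i => σ.restrict (τ i)) (homMatrix σ) k).card ≤ u k * k ^ (n + 1) := by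
  have hdiv (C : ℝ) : Tendsto (fun k : ℕ => C / k) atTop (𝓝 0) :=
    tendsto_const_div_atTop_nhds_zero_nat C
  by_cases h : normalizedVolume σ = 0
  · obtain ⟨κ, hκ, hzero⟩ := exists_homMatrix_mulVec_eq_zero hσ h
    obtain ⟨C, hC⟩ := exists_card_boxTranslates_mul_le (fun i => σ.restrict (τ i)) hκ hzero
    refine ⟨fun k => (Fintype.card I * C ^ (n + 1) : ℝ) / k, by simpa [h] using hdiv _,
      fun k hk => ?_⟩
    have hk0 : (0 : ℝ) < k := by positivity
    have := hC k
    rw [Fintype.card_fin, mul_pow, ← mul_assoc] at this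
    rw [div_mul_eq_mul_div, le_div_iff₀ hk0]
    exact_mod_cast this
  · obtain ⟨e, he⟩ := exists_equiv_of_normalizedVolume_ne_zero h
    obtain ⟨C, hC⟩ := exists_card_boxTranslates_le_natAbs_det (fun i => σ.restrict (τ i) ∘ e)
      (Int.natAbs_ne_zero.1 (he ▸ h))
    refine ⟨fun k => normalizedVolume σ * (1 + C / k) ^ (n + 1), ?_, fun k hk => ?_⟩
    · simpa using (((hdiv C).const_add 1).pow (n + 1)).const_mul (normalizedVolume σ : ℝ)
    · have := (card_boxTranslates_le_submatrix e).trans (hC k)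
      rw [← he, Fintype.card_fin] at this
      have hk0 : (k : ℝ) ≠ 0 := by positivity
      rw [mul_assoc, ← mul_pow, add_mul, one_mul, div_mul_cancel₀ _ hk0]
      exact_mod_cast this

lemma finrank_homSpan_pairing_le : Module.finrank ℝ (homSpan pairing S) ≤ n + 1 := by
  refine (Submodule.finrank_le _).trans_eq ?_
  rw [Module.finrank_prod, Subspace.dual_finrank_eq, Module.finrank_self,
    Module.finrank_fintype_fun_eq_card, Fintype.card_fin, add_comm]

variable {b : Finset (Fin n → ℤ) → Fin n → ℤ} {τ : I → (Fin n → ℤ) → ℤ}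

lemma card_mul_pow_le_sum_card_boxTranslates
    (hb : ∀ S : Finset (Fin n → ℤ), S.Nonempty → b S ∈ S) (hne : S.Nonempty)
    (hS : InConvexPosition pairing S) (hpair : PairwiseMonotone pairing (translates τ) S)
    (hinj : ∀ p q, (∀ α ∈ S, translates τ p α = translates τ q α) → p = q) (k : ℕ) :
    Fintype.card I * k ^ (n + 1) ≤ ∑ σ ∈ pullingSimplices pairing S b,
      (boxTranslates (fun i => σ.restrict (τ i)) (homMatrix σ) k).card := by
  let l : I × (Fin (n + 1) → Fin k) → (Fin n → ℤ) → ℤ := fun p =>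
    translates τ (p.1, fun j => (p.2 j : ℤ))
  have hl : ∀ p q, (∀ α ∈ S, l p α = l q α) → p = q := fun p q h => by
    obtain ⟨hfst, hsnd⟩ := Prod.mk.inj (hinj _ _ h)
    exact Prod.ext hfst (funext fun j => Fin.ext (by exact_mod_cast congrFun hsnd j))
  have himage : ∀ σ : Finset (Fin n → ℤ), (Finset.univ.image fun p => σ.restrict (l p)) =
      boxTranslates (fun i => σ.restrict (τ i)) (homMatrix σ) k := fun σ => by
    ext x
    rw [mem_boxTranslates, Finset.mem_image]
    exact ⟨fun ⟨p, _, hp⟩ => ⟨p.1, p.2, hp⟩, fun ⟨i, w, h⟩ => ⟨(i, w), Finset.mem_univ _, h⟩⟩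
  calc Fintype.card I * k ^ (n + 1) = Fintype.card (I × (Fin (n + 1) → Fin k)) := by
        rw [Fintype.card_prod, Fintype.card_fun, Fintype.card_fin, Fintype.card_fin]
    _ ≤ ∑ σ ∈ pullingSimplices pairing S b,
        (Finset.univ.image fun p => σ.restrict (l p)).card :=
        card_le_sum_card_image_restrict hb hne hS (fun p q => hpair _ _) hl
    _ = _ := Finset.sum_congr rfl fun σ _ => congrArg Finset.card (himage σ)

theorem card_le_sum_normalizedVolume
    (hb : ∀ S : Finset (Fin n → ℤ), S.Nonempty → b S ∈ S) (hne : S.Nonempty)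
    (hS : InConvexPosition pairing S) (hpair : PairwiseMonotone pairing (translates τ) S)
    (hinj : ∀ p q, (∀ α ∈ S, translates τ p α = translates τ q α) → p = q) :
    Fintype.card I ≤ ∑ σ ∈ pullingSimplices pairing S b, normalizedVolume σ := by
  have hcard : ∀ σ ∈ pullingSimplices pairing S b, σ.card ≤ n + 1 := fun σ hσ =>
    ((mem_pullingSimplices hb).1 hσ).card_le_finrank_homSpan.trans finrank_homSpan_pairing_le
  choose! u hu hle using fun σ hσ => exists_tendsto_card_boxTranslates_le τ (hcard σ hσ)
  suffices h : (Fintype.card I : ℝ) ≤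
      ∑ σ ∈ pullingSimplices pairing S b, (normalizedVolume σ : ℝ) by
    exact_mod_cast h
  refine ge_of_tendsto (tendsto_finsetSum _ hu) ?_
  filter_upwards [eventually_ne_atTop 0] with k hk
  refine le_of_mul_le_mul_right ?_ (show (0 : ℝ) < k ^ (n + 1) by positivity)
  calc (Fintype.card I : ℝ) * k ^ (n + 1)
      ≤ ∑ σ ∈ pullingSimplices pairing S b,
        ((boxTranslates (fun i => σ.restrict (τ i)) (homMatrix σ) k).card : ℝ) := by
        exact_mod_cast card_mul_pow_le_sum_card_boxTranslates hb hne hS hpair hinj k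
    _ ≤ (∑ σ ∈ pullingSimplices pairing S b, u σ k) * k ^ (n + 1) := by
        rw [Finset.sum_mul]
        exact Finset.sum_le_sum fun σ hσ => hle σ hσ k hk

end NormalizedVolume

/-! ### Normalised volumes and the volume of the Newton polytope -/

/-- The open standard simplex in `ℝⁿ`. -/
def openStdSimplex (n : ℕ) : Set (Fin n → ℝ) := {x | (∀ i, 0 < x i) ∧ ∑ i, x i < 1}

section Volume

variable {n : ℕ} {S σ τ : Finset (Fin n → ℤ)}

/-- The reflection of `ℝⁿ` that changes the sign of the coordinates in `s`. -/
noncomputable def signFlip (s : Finset (Fin n)) : (Fin n → ℝ) →ₗ[ℝ] Fin n → ℝ :=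
  Matrix.toLin' (Matrix.diagonal fun i => if i ∈ s then -1 else 1)

lemma signFlip_apply (s : Finset (Fin n)) (x : Fin n → ℝ) (i : Fin n) :
    signFlip s x i = if i ∈ s then -x i else x i := by
  simp [signFlip, Matrix.mulVec_diagonal, ite_mul]

lemma volume_image_signFlip (s : Finset (Fin n)) (t : Set (Fin n → ℝ)) :
    volume (signFlip s '' t) = volume t := by
  have hdet : |LinearMap.det (signFlip s)| = 1 := by
    rw [signFlip, LinearMap.det_toLin', Matrix.det_diagonal, Finset.abs_prod]
    exact Finset.prod_eq_one fun i _ => by split_ifs <;> simp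
  rw [Measure.addHaar_image_linearMap, hdet, ENNReal.ofReal_one, one_mul]

lemma setOf_sum_abs_lt_one_subset :
    {x : Fin n → ℝ | ∑ i, |x i| ^ (1 : ℝ) < 1} ⊆
      (⋃ s, signFlip s '' openStdSimplex n) ∪ ⋃ i, {x : Fin n → ℝ | x i = 0} := by
  intro x hx
  by_cases hzero : ∃ i, x i = 0
  · exact Or.inr (Set.mem_iUnion.2 hzero)
  · push Not at hzero
    refine Or.inl (Set.mem_iUnion.2 ⟨Finset.univ.filter (x · < 0), fun i => |x i|,
      ⟨fun i => abs_pos.2 (hzero i), by simpa using hx⟩, funext fun i => ?_⟩)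
    rw [signFlip_apply]
    obtain h | h := lt_or_ge (x i) 0
    · simp [h, abs_of_neg h]
    · simp [h.not_gt, abs_of_nonneg h]

lemma one_le_factorial_mul_volume_openStdSimplex (n : ℕ) :
    (1 : ℝ≥0∞) ≤ n.factorial * volume (openStdSimplex n) := by
  have hball : volume {x : Fin n → ℝ | ∑ i, |x i| ^ (1 : ℝ) < 1} =
      ENNReal.ofReal (2 ^ n / n.factorial) := by
    rw [MeasureTheory.volume_sum_rpow_lt_one (Fin n) le_rfl]
    simp [one_add_one_eq_two, Real.Gamma_nat_eq_factorial]
  have hnull : volume (⋃ i, {x : Fin n → ℝ | x i = 0}) = 0 :=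
    measure_iUnion_null_iff.2 fun i => Measure.pi_hyperplane _ i 0
  have hle : ENNReal.ofReal (2 ^ n / n.factorial) ≤ 2 ^ n * volume (openStdSimplex n) := by
    rw [← hball]
    refine (measure_mono setOf_sum_abs_lt_one_subset).trans ((measure_union_le _ _).trans ?_)
    rw [hnull, add_zero]
    refine (measure_iUnion_fintype_le _ _).trans_eq ?_
    simp_rw [volume_image_signFlip]
    simp
  have hfac : (0 : ℝ) < n.factorial := by positivity
  refine (ENNReal.mul_le_mul_iff_right (a := 2 ^ n) (by simp) (by simp)).1 ?_
  calc (2 : ℝ≥0∞) ^ n * 1 = n.factorial * ENNReal.ofReal (2 ^ n / n.factorial) := by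
        rw [← ENNReal.ofReal_natCast, ← ENNReal.ofReal_mul hfac.le, mul_div_cancel₀ _ hfac.ne']
        simp [ENNReal.ofReal_pow]
    _ ≤ n.factorial * (2 ^ n * volume (openStdSimplex n)) := by gcongr
    _ = 2 ^ n * (n.factorial * volume (openStdSimplex n)) := mul_left_comm _ _ _

lemma det_of_sub_row_zero {R : Type*} [CommRing R] (M : Matrix (Fin (n + 1)) (Fin (n + 1)) R)
    (hM : ∀ i, M i 0 = 1) :
    (Matrix.of fun i j : Fin n => M i.succ j.succ - M 0 j.succ).det = M.det := by
  let B : Matrix (Fin (n + 1)) (Fin (n + 1)) R :=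
    Matrix.of fun i j => if i = 0 then M 0 j else M i j - M 0 j
  have hdet : M.det = B.det :=
    Matrix.det_eq_of_forall_row_eq_smul_add_const (fun i => if i = 0 then 0 else 1) 0 (by simp)
      fun i j => by by_cases h : i = 0 <;> simp [B, h]
  rw [hdet, Matrix.det_succ_column_zero, Finset.sum_eq_single 0]
  · have hminor : B.submatrix (Fin.succAbove 0) Fin.succ =
        Matrix.of fun i j : Fin n => M i.succ j.succ - M 0 j.succ := by
      ext i j
      simp [B, Fin.succ_ne_zero]
    rw [hminor]
    simp [B, hM]
  · intro i _ hi
    simp [B, hi, hM]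
  · simp

/-- The relative interior of the simplex with vertex set `σ`. -/
def openSimplex (σ : Finset (Fin n → ℤ)) : Set (Fin n → ℝ) :=
  {x | ∃ a : (Fin n → ℤ) → ℝ, (∀ α ∈ σ, 0 < a α) ∧ ∑ α ∈ σ, a α = 1 ∧
    ∑ α ∈ σ, a α • realPoint α = x}

lemma convex_openSimplex : Convex ℝ (openSimplex σ) := by
  rintro _ ⟨a, ha, ha1, rfl⟩ _ ⟨c, hc, hc1, rfl⟩ s t hs ht hst
  refine ⟨fun α => s * a α + t * c α,
    fun α hα => convex_Ioi (0 : ℝ) (ha α hα) (hc α hα) hs ht hst, ?_, ?_⟩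
  · rw [Finset.sum_add_distrib, ← Finset.mul_sum, ← Finset.mul_sum, ha1, hc1, mul_one, mul_one, hst]
  · simp only [add_smul, mul_smul, Finset.sum_add_distrib, Finset.smul_sum]

lemma openSimplex_subset_convexHull (hσ : σ ⊆ S) :
    openSimplex σ ⊆ convexHull ℝ (realPoint '' S) := by
  rintro _ ⟨a, ha, ha1, rfl⟩
  exact (convex_convexHull ℝ _).sum_mem (fun α hα => (ha α hα).le) ha1 fun α hα =>
    subset_convexHull ℝ _ ⟨α, hσ hα, rfl⟩

lemma sum_smul_homogenize_pairing (a : (Fin n → ℤ) → ℝ) :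
    ∑ α ∈ σ, a α • homogenize pairing α =
      (∑ α ∈ σ, a α, dotProductEquiv ℝ (Fin n) (∑ α ∈ σ, a α • realPoint α)) := by
  simp [homogenize, pairing, Prod.ext_iff, Prod.fst_sum, Prod.snd_sum]

lemma sum_smul_realPoint_mem_openSimplex {ι : Type*} [Fintype ι] (e : ι ≃ σ) {a : ι → ℝ}
    (ha : ∀ i, 0 < a i) (ha1 : ∑ i, a i = 1) :
    ∑ i, a i • realPoint (e i).1 ∈ openSimplex σ := by
  have hinj : Function.Injective fun i => (e i).1 := Subtype.val_injective.comp e.injective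
  have hext : ∀ i, Function.extend (fun i => (e i).1) a 1 (e i).1 = a i := hinj.extend_apply a 1
  refine ⟨Function.extend (fun i => (e i).1) a 1, fun α hα => ?_, ?_, ?_⟩
  · have := ha (e.symm ⟨α, hα⟩)
    rwa [← hext, e.apply_symm_apply] at this
  · rw [← Finset.sum_coe_sort, ← e.sum_comp]
    simpa only [hext] using ha1
  · rw [← Finset.sum_coe_sort, ← e.sum_comp]
    simp only [hext]

lemma image_subset_openSimplex (e : Fin (n + 1) ≃ σ) :
    (fun x => realPoint (e 0).1 + (Matrix.of fun i j : Fin n =>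
      realPoint (e i.succ).1 j - realPoint (e 0).1 j).transpose.mulVec x) '' openStdSimplex n ⊆
        openSimplex σ := by
  rintro _ ⟨x, ⟨hx, hx1⟩, rfl⟩
  let a : Fin (n + 1) → ℝ := Fin.cons (1 - ∑ i, x i) x
  have ha : ∀ i, 0 < a i := Fin.cases (sub_pos.2 hx1) hx
  have ha1 : ∑ i, a i = 1 := by simp [a, Fin.sum_univ_succ]
  convert sum_smul_realPoint_mem_openSimplex e ha ha1 using 1
  ext j
  simp only [a, Fin.sum_univ_succ, Fin.cons_zero, Fin.cons_succ, Pi.add_apply, Pi.smul_apply,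
    Finset.sum_apply, smul_eq_mul, Matrix.mulVec, dotProduct, Matrix.transpose_apply,
    Matrix.of_apply, sub_mul, Finset.sum_sub_distrib, Finset.sum_mul, one_mul, mul_comm (x _)]
  simp only [mul_comm (realPoint (e 0).1 j)]
  ring

lemma natAbs_det_homMatrix_le (e : Fin (n + 1) ≃ σ) :
    (((homMatrix σ).submatrix e id).det.natAbs : ℝ≥0∞) ≤ n.factorial * volume (openSimplex σ) := by
  let D : Matrix (Fin n) (Fin n) ℝ :=
    Matrix.of fun i j => realPoint (e i.succ).1 j - realPoint (e 0).1 j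
  have hdet : D.det = (((homMatrix σ).submatrix e id).det : ℝ) := by
    rw [← det_of_sub_row_zero _ fun i => rfl, ← eq_intCast (Int.castRingHom ℝ), RingHom.map_det]
    congr 1
    ext i j
    simp [D, homMatrix, homRow, realPoint]
  have hvol : volume ((fun x => realPoint (e 0).1 + D.transpose.mulVec x) '' openStdSimplex n) =
      ENNReal.ofReal |D.det| * volume (openStdSimplex n) := by
    have himage := Set.image_image (fun x => realPoint (e 0).1 + x) (Matrix.toLin' D.transpose)
      (openStdSimplex n)
    simp only [Matrix.toLin'_apply] at himage
    rw [← himage, Set.image_add_left, measure_preimage_add, ← D.det_transpose,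
      ← LinearMap.det_toLin', ← Measure.addHaar_image_linearMap]
  calc (((homMatrix σ).submatrix e id).det.natAbs : ℝ≥0∞) = ENNReal.ofReal |D.det| * 1 := by
        rw [hdet, mul_one, ← ENNReal.ofReal_natCast, Nat.cast_natAbs, Int.cast_abs]
    _ ≤ ENNReal.ofReal |D.det| * (n.factorial * volume (openStdSimplex n)) := by
        gcongr
        exact one_le_factorial_mul_volume_openStdSimplex n
    _ = n.factorial * (ENNReal.ofReal |D.det| * volume (openStdSimplex n)) := mul_left_comm _ _ _
    _ ≤ n.factorial * volume (openSimplex σ) := by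
        rw [← hvol]
        gcongr
        exact image_subset_openSimplex e

lemma homSpan_eq_top_of_normalizedVolume_ne_zero (h : normalizedVolume σ ≠ 0) :
    homSpan pairing σ = ⊤ := by
  obtain ⟨e, he⟩ := exists_equiv_of_normalizedVolume_ne_zero h
  let Ψ : ℝ × Module.Dual ℝ (Fin n → ℝ) →ₗ[ℝ] Fin (n + 1) → ℝ := LinearMap.pi <|
    Fin.cons (LinearMap.fst ℝ ℝ _) fun j =>
      (Module.Dual.eval ℝ _ (Pi.single j 1)).comp (LinearMap.snd ℝ ℝ _)
  let M : Matrix (Fin (n + 1)) (Fin (n + 1)) ℝ :=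
    ((homMatrix σ).submatrix e id).map (Int.castRingHom ℝ)
  have hM : M.det ≠ 0 := by
    rw [show M.det = _ from (RingHom.map_det _ _).symm]
    rw [eq_intCast, Int.cast_ne_zero]
    exact Int.natAbs_ne_zero.1 (he ▸ h)
  have hΨ : Ψ ∘ (fun i => homogenize pairing (e i).1) = M.row := by
    funext i j
    refine Fin.cases ?_ (fun j => ?_) j <;>
      simp [Ψ, M, homogenize, pairing, homMatrix, homRow, realPoint]
  have hli : LinearIndependent ℝ fun i => homogenize pairing (e i).1 :=
    .of_comp Ψ (hΨ ▸ Matrix.linearIndependent_rows_of_det_ne_zero hM)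
  rw [eq_top_iff, ← hli.span_eq_top_of_card_eq_finrank' (by simp [add_comm])]
  refine Submodule.span_mono ?_
  rintro _ ⟨i, rfl⟩
  exact ⟨_, (e i).2, rfl⟩

variable {b : Finset (Fin n → ℤ) → Fin n → ℤ}

theorem sum_normalizedVolume_le (hb : ∀ S : Finset (Fin n → ℤ), S.Nonempty → b S ∈ S) :
    ((∑ σ ∈ pullingSimplices pairing S b, normalizedVolume σ : ℕ) : ℝ≥0∞) ≤
      n.factorial * volume (convexHull ℝ (realPoint '' (S : Set (Fin n → ℤ)))) := by
  classical
  let T := (pullingSimplices pairing S b).filter (normalizedVolume · ≠ 0)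
  have hT : ∀ {σ}, σ ∈ T → IsPullingSimplex pairing b S σ ∧ normalizedVolume σ ≠ 0 := fun hσ =>
    (Finset.mem_filter.1 hσ).imp_left (mem_pullingSimplices hb).1
  have hdisj : (T : Set (Finset (Fin n → ℤ))).Pairwise
      (Function.onFun (AEDisjoint volume) openSimplex) := by
    refine fun σ hσ τ hτ hne => (Set.disjoint_left.2 fun x hxσ hxτ => hne ?_).aedisjoint
    obtain ⟨a, ha, ha1, hax⟩ := hxσ
    obtain ⟨c, hc, hc1, hcx⟩ := hxτ
    refine (hT hσ).1.eq_of_sum_smul_homogenize_eq hb (hT hτ).1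
      (homSpan_eq_top_of_normalizedVolume_ne_zero (hT hσ).2 ▸ le_top)
      (homSpan_eq_top_of_normalizedVolume_ne_zero (hT hτ).2 ▸ le_top) ha hc ?_
    rw [sum_smul_homogenize_pairing, sum_smul_homogenize_pairing, ha1, hc1, hax, hcx]
  calc ((∑ σ ∈ pullingSimplices pairing S b, normalizedVolume σ : ℕ) : ℝ≥0∞)
      = ∑ σ ∈ T, (normalizedVolume σ : ℝ≥0∞) := by rw [← Nat.cast_sum, Finset.sum_filter_ne_zero]
    _ ≤ ∑ σ ∈ T, n.factorial * volume (openSimplex σ) := Finset.sum_le_sum fun σ hσ => by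
        obtain ⟨e, he⟩ := exists_equiv_of_normalizedVolume_ne_zero (hT hσ).2
        exact he ▸ natAbs_det_homMatrix_le e
    _ = n.factorial * volume (⋃ σ ∈ T, openSimplex σ) := by
        rw [← Finset.mul_sum, measure_biUnion_finset₀ hdisj fun σ _ =>
          convex_openSimplex.nullMeasurableSet volume]
    _ ≤ n.factorial * volume (convexHull ℝ (realPoint '' (S : Set (Fin n → ℤ)))) := by
        gcongr
        exact Set.iUnion₂_subset fun σ hσ =>
          openSimplex_subset_convexHull ((hT hσ).1.subset hb)

end Volume

/-! ### Logarithmic variation and winding numbers -/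

section ArgumentPrinciple

lemma exists_continuous_exp_eq {X : Type*} [TopologicalSpace X] [SimplyConnectedSpace X]
    [LocallyPathConnectedSpace X] {f : X → ℂ} (hf : Continuous f) (h0 : ∀ x, f x ≠ 0) :
    ∃ L : X → ℂ, Continuous L ∧ ∀ x, exp (L x) = f x := by
  obtain ⟨x₀⟩ : Nonempty X := inferInstance
  obtain ⟨L, ⟨-, hL⟩, -⟩ :=
    isCoveringMapOn_exp.existsUnique_continuousMap_lifts ⟨f, hf⟩ (exp_log (h0 x₀)) h0
  exact ⟨L, L.continuous, congrFun hL⟩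

lemma exists_int_forall_eq_add_of_exp_eq {X : Type*} [TopologicalSpace X] {s : Set X}
    (hs : IsPreconnected s) {L L' : X → ℂ} (hL : ContinuousOn L s) (hL' : ContinuousOn L' s)
    (h : ∀ x ∈ s, exp (L x) = exp (L' x)) :
    ∃ k : ℤ, ∀ x ∈ s, L x = L' x + k * (2 * Real.pi * I) := by
  obtain rfl | ⟨x₀, hx₀⟩ := s.eq_empty_or_nonempty
  · exact ⟨0, by simp⟩
  have hint : ∀ x ∈ s, ∃ k : ℤ, L x = L' x + k * (2 * Real.pi * I) :=
    fun x hx => exp_eq_exp_iff_exists_int.1 (h x hx)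
  have hmaps : MapsTo (fun x => (L x - L' x) / (2 * Real.pi * I)) s (range ((↑) : ℤ → ℂ)) := by
    intro x hx
    obtain ⟨k, hk⟩ := hint x hx
    refine ⟨k, ?_⟩
    beta_reduce
    rw [hk, add_sub_cancel_left, mul_div_cancel_right₀ _ two_pi_I_ne_zero]
  obtain ⟨k, hk⟩ := hint x₀ hx₀
  refine ⟨k, fun x hx => ?_⟩
  have hconst := hs.constant_of_mapsTo isClosedEmbedding_intCast.isEmbedding.isDiscrete_range
    ((hL.sub hL').div_const _) hmaps hx hx₀
  beta_reduce at hconst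
  rw [div_left_inj' two_pi_I_ne_zero, Pi.sub_apply, Pi.sub_apply, hk, add_sub_cancel_left]
    at hconst
  rw [← hconst, add_sub_cancel]

/-- `HasLogVariation f s t w`: on the interval `[s, t]` the function `f` has a continuous logarithm,
whose increment from `s` to `t` is `w`. -/
def HasLogVariation (f : ℝ → ℂ) (s t : ℝ) (w : ℂ) : Prop :=
  ∃ L : ℝ → ℂ, ContinuousOn L (Icc s t) ∧ (∀ x ∈ Icc s t, exp (L x) = f x) ∧ L t - L s = w

variable {f g : ℝ → ℂ} {s t : ℝ} {w w' : ℂ}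

lemma HasLogVariation.unique (hst : s ≤ t) (h : HasLogVariation f s t w)
    (h' : HasLogVariation f s t w') : w = w' := by
  obtain ⟨L, hL, hexp, rfl⟩ := h
  obtain ⟨L', hL', hexp', rfl⟩ := h'
  obtain ⟨k, hk⟩ := exists_int_forall_eq_add_of_exp_eq isPreconnected_Icc hL hL' fun x hx =>
    (hexp x hx).trans (hexp' x hx).symm
  rw [hk t (right_mem_Icc.2 hst), hk s (left_mem_Icc.2 hst), add_sub_add_right_eq_sub]

lemma HasLogVariation.ne_zero (h : HasLogVariation f s t w) {x : ℝ} (hx : x ∈ Icc s t) :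
    f x ≠ 0 := by
  obtain ⟨L, -, hexp, -⟩ := h
  exact hexp x hx ▸ exp_ne_zero _

lemma HasLogVariation.mul (h : HasLogVariation f s t w) (h' : HasLogVariation g s t w') :
    HasLogVariation (fun x => f x * g x) s t (w + w') := by
  obtain ⟨L, hL, hexp, rfl⟩ := h
  obtain ⟨L', hL', hexp', rfl⟩ := h'
  exact ⟨L + L', hL.add hL', fun x hx => by rw [Pi.add_apply, exp_add, hexp x hx, hexp' x hx],
    add_sub_add_comm _ _ _ _⟩

lemma hasLogVariation_of_re_mul_pos (hf : ContinuousOn f (Icc s t)) {e : ℂ}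
    (hpos : ∀ x ∈ Icc s t, 0 < (e * f x).re) :
    HasLogVariation f s t (log (e * f t) - log (e * f s)) := by
  have h : ∀ x ∈ Icc s t, e * f x ∈ slitPlane := fun x hx => Or.inl (hpos x hx)
  refine ⟨fun x => log (e * f x) - log e,
    ((continuousOn_const.mul hf).clog h).sub continuousOn_const, fun x hx => ?_,
    sub_sub_sub_cancel_right _ _ _⟩
  have he : e ≠ 0 := left_ne_zero_of_mul (slitPlane_ne_zero (h x hx))
  rw [exp_sub, exp_log (slitPlane_ne_zero (h x hx)), exp_log he, mul_div_cancel_left₀ _ he]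

/-- `HasRectWinding h a b c d N`: along the positively oriented boundary of the rectangle
`[a, b] ×ℂ [c, d]` the function `h` has logarithmic variation `N * 2πi`. -/
def HasRectWinding (h : ℂ → ℂ) (a b c d : ℝ) (N : ℕ) : Prop :=
  ∃ bottom right top left : ℂ,
    HasLogVariation (fun x => h (x + c * I)) a b bottom ∧
    HasLogVariation (fun y => h (b + y * I)) c d right ∧
    HasLogVariation (fun x => h (x + d * I)) a b top ∧
    HasLogVariation (fun y => h (a + y * I)) c d left ∧
    bottom + right - top - left = N * (2 * Real.pi * I)

variable {h k : ℂ → ℂ} {a b c d : ℝ} {M N : ℕ}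

lemma HasRectWinding.mul (hM : HasRectWinding h a b c d M) (hN : HasRectWinding k a b c d N) :
    HasRectWinding (fun z => h z * k z) a b c d (M + N) := by
  obtain ⟨w₁, w₂, w₃, w₄, h₁, h₂, h₃, h₄, hw⟩ := hM
  obtain ⟨v₁, v₂, v₃, v₄, k₁, k₂, k₃, k₄, hv⟩ := hN
  refine ⟨_, _, _, _, h₁.mul k₁, h₂.mul k₂, h₃.mul k₃, h₄.mul k₄, ?_⟩
  push_cast
  linear_combination hw + hv

lemma hasRectWinding_zero_of_forall_ne_zero (hab : a ≤ b) (hcd : c ≤ d) (hh : Continuous h)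
    (h0 : ∀ z ∈ Icc a b ×ℂ Icc c d, h z ≠ 0) : HasRectWinding h a b c d 0 := by
  let p : ℝ → ℝ := fun x => projIcc a b hab x
  let q : ℝ → ℝ := fun y => projIcc c d hcd y
  have hp : Continuous p := continuous_subtype_val.comp continuous_projIcc
  have hq : Continuous q := continuous_subtype_val.comp continuous_projIcc
  obtain ⟨L, hL, hexp⟩ := exists_continuous_exp_eq (f := fun x : ℝ × ℝ => h (p x.1 + q x.2 * I))
    (by fun_prop) fun x => h0 _ (by
      rw [mem_reProdIm]
      simpa using ⟨(projIcc a b hab x.1).2, (projIcc c d hcd x.2).2⟩)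
  have hexp : ∀ x ∈ Icc a b, ∀ y ∈ Icc c d, exp (L (x, y)) = h (x + y * I) := fun x hx y hy => by
    simp only [hexp, p, q, projIcc_of_mem _ hx, projIcc_of_mem _ hy]
  refine ⟨_, _, _, _,
    ⟨fun x => L (x, c), by fun_prop, fun x hx => hexp x hx c (left_mem_Icc.2 hcd), rfl⟩,
    ⟨fun y => L (b, y), by fun_prop, hexp b (right_mem_Icc.2 hab), rfl⟩,
    ⟨fun x => L (x, d), by fun_prop, fun x hx => hexp x hx d (right_mem_Icc.2 hcd), rfl⟩,
    ⟨fun y => L (a, y), by fun_prop, hexp a (left_mem_Icc.2 hab), rfl⟩, ?_⟩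
  simp

lemma log_I_mul_of_re_pos {z : ℂ} (hz : 0 < z.re) : log (I * z) = log z + Real.pi / 2 * I := by
  have harg := abs_lt.1 (abs_arg_lt_pi_div_two_iff.2 (Or.inl hz))
  rw [log_mul I_ne_zero (fun h => by simp [h] at hz), log_I, add_comm]
  rw [arg_I]
  constructor <;> linarith [Real.pi_pos]

lemma log_neg_I_mul_of_re_pos {z : ℂ} (hz : 0 < z.re) :
    log (-I * z) = log z - Real.pi / 2 * I := by
  have harg := abs_lt.1 (abs_arg_lt_pi_div_two_iff.2 (Or.inl hz))
  rw [log_mul (neg_ne_zero.2 I_ne_zero) (fun h => by simp [h] at hz), log_neg_I]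
  · ring
  rw [arg_neg_I]
  constructor <;> linarith [Real.pi_pos]

/- Seen from `p`, each side of the rectangle lies in a half-plane; each of the four corners, where
the branches of the logarithm attached to two sides meet, contributes `π / 2 * I`. -/
lemma hasRectWinding_sub_const {p : ℂ} (ha : a < p.re) (hb : p.re < b) (hc : c < p.im)
    (hd : p.im < d) : HasRectWinding (fun z => z - p) a b c d 1 := by
  have hbr : 0 < (b + c * I - p).re := by simpa using hb
  have htr : 0 < (b + d * I - p).re := by simpa using hb
  have htl : 0 < (-1 * (a + d * I - p)).re := by simpa using ha
  have hbl : 0 < (-1 * (a + c * I - p)).re := by simpa using ha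
  refine ⟨_, _, _, _,
    hasLogVariation_of_re_mul_pos (e := I) (by fun_prop) fun x _ => by simpa using hc,
    hasLogVariation_of_re_mul_pos (e := 1) (by fun_prop) fun x _ => by simpa using hb,
    hasLogVariation_of_re_mul_pos (e := -I) (by fun_prop) fun x _ => by simpa using hd,
    hasLogVariation_of_re_mul_pos (e := -1) (by fun_prop) fun x _ => by simpa using ha, ?_⟩
  rw [one_mul, one_mul, log_I_mul_of_re_pos hbr, log_neg_I_mul_of_re_pos htr,
    show -I * (a + d * I - p) = I * (-1 * (a + d * I - p)) by ring,
    show I * (a + c * I - p) = -I * (-1 * (a + c * I - p)) by ring,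
    log_I_mul_of_re_pos htl, log_neg_I_mul_of_re_pos hbl]
  push_cast
  ring

lemma hasRectWinding_multiset_prod_sub {S : Multiset ℂ}
    (hS : ∀ p ∈ S, p ∈ Ioo a b ×ℂ Ioo c d) (hN : HasRectWinding h a b c d N) :
    HasRectWinding (fun z => (S.map (z - ·)).prod * h z) a b c d (S.card + N) := by
  induction S using Multiset.induction_on with
  | empty => simpa using hN
  | cons p S ih =>
    obtain ⟨hre, him⟩ := mem_reProdIm.1 (hS p (Multiset.mem_cons_self p S))
    have hmul := (hasRectWinding_sub_const hre.1 hre.2 him.1 him.2).mul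
      (ih fun q hq => hS q (Multiset.mem_cons_of_mem hq))
    simpa only [Multiset.map_cons, Multiset.prod_cons, Multiset.card_cons, mul_assoc,
      add_comm 1, add_right_comm] using hmul

lemma exists_eq_pow_mul_of_ne_zero (hh : Differentiable ℂ h) (hne : h ≠ 0) (p : ℂ) :
    ∃ (m : ℕ) (g : ℂ → ℂ), Differentiable ℂ g ∧ g p ≠ 0 ∧ ∀ z, h z = (z - p) ^ m * g z := by
  have hnhds : ¬∀ᶠ z in nhds p, h z = 0 := fun hev => hne <|
    AnalyticOnNhd.eq_of_eventuallyEq (fun z _ => hh.analyticAt z) (fun _ _ => analyticAt_const) hev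
  obtain ⟨m, g, hg, hgp, hgz⟩ :=
    (hh.analyticAt p).exists_eventuallyEq_pow_smul_nonzero_iff.2 hnhds
  refine ⟨m, Function.update (fun z => h z / (z - p) ^ m) p (g p), fun z => ?_, by simpa using hgp,
    fun z => ?_⟩
  · obtain rfl | hz := eq_or_ne z p
    · refine hg.differentiableAt.congr_of_eventuallyEq (hgz.mono fun y hy => ?_)
      obtain rfl | hyz := eq_or_ne y z
      · exact Function.update_self ..
      · rw [Function.update_of_ne hyz, hy, smul_eq_mul,
          mul_div_cancel_left₀ _ (pow_ne_zero _ (sub_ne_zero.2 hyz))]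
    · refine DifferentiableAt.congr_of_eventuallyEq (f := fun z => h z / (z - p) ^ m) ?_
        ((eventually_ne_nhds hz).mono fun y hy => Function.update_of_ne hy ..)
      exact (hh z).div (by fun_prop) (pow_ne_zero _ (sub_ne_zero.2 hz))
  · obtain rfl | hz := eq_or_ne z p
    · simpa using hgz.self_of_nhds
    · rw [Function.update_of_ne hz, mul_div_cancel₀ _ (pow_ne_zero _ (sub_ne_zero.2 hz))]

lemma finite_zeros_inter_of_isCompact (hh : Differentiable ℂ h) (hne : h ≠ 0) {K : Set ℂ}
    (hK : IsCompact K) : {z ∈ K | h z = 0}.Finite := by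
  by_contra hinf
  obtain ⟨x, -, hacc⟩ := Set.Infinite.exists_accPt_of_subset_isCompact hinf hK fun z hz => hz.1
  rw [accPt_iff_frequently_nhdsNE] at hacc
  exact hne (AnalyticOnNhd.eq_of_frequently_eq (fun z _ => hh.analyticAt z)
    (fun _ _ => analyticAt_const) (hacc.mono fun z hz => hz.2))

lemma exists_eq_multiset_prod_mul (hh : Differentiable ℂ h) (hne : h ≠ 0) {K : Set ℂ}
    (hK : IsCompact K) : ∃ (S : Multiset ℂ) (g : ℂ → ℂ), (∀ p ∈ S, p ∈ K ∧ h p = 0) ∧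
      Differentiable ℂ g ∧ (∀ z ∈ K, g z ≠ 0) ∧ ∀ z, h z = (S.map (z - ·)).prod * g z := by
  induction hn : {z ∈ K | h z = 0}.ncard generalizing h with
  | zero =>
    have hempty := (ncard_eq_zero (finite_zeros_inter_of_isCompact hh hne hK)).1 hn
    exact ⟨0, h, by simp, hh, fun z hz hz0 => hempty.le ⟨hz, hz0⟩, by simp⟩
  | succ n ih =>
    have hfin := finite_zeros_inter_of_isCompact hh hne hK
    obtain ⟨p, hp⟩ : {z ∈ K | h z = 0}.Nonempty := (ncard_pos hfin).1 (hn ▸ n.succ_pos)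
    obtain ⟨m, g, hg, hgp, hgz⟩ := exists_eq_pow_mul_of_ne_zero hh hne p
    have hzeros : {z ∈ K | g z = 0} = {z ∈ K | h z = 0} \ {p} := by
      ext z
      constructor
      · exact fun hz => ⟨⟨hz.1, by rw [hgz, hz.2, mul_zero]⟩, fun hzp => hgp (hzp ▸ hz.2)⟩
      · exact fun ⟨hz, hzp⟩ => ⟨hz.1, (mul_eq_zero.1 (hgz z ▸ hz.2)).resolve_left
          (pow_ne_zero _ (sub_ne_zero.2 hzp))⟩
    obtain ⟨S, k, hS, hk, hk0, hgk⟩ := ih hg (fun h0 => hgp (congrFun h0 p))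
      (by rw [hzeros, ncard_sdiff_singleton_of_mem hp, hn, Nat.add_sub_cancel])
    refine ⟨Multiset.replicate m p + S, k, fun q hq => ?_, hk, hk0, fun z => ?_⟩
    · obtain hq | hq := Multiset.mem_add.1 hq
      · exact Multiset.eq_of_mem_replicate hq ▸ hp
      · exact (hS q hq).imp_right fun h0 => by rw [hgz, h0, mul_zero]
    · rw [hgz, hgk, Multiset.map_add, Multiset.prod_add, Multiset.map_replicate,
        Multiset.prod_replicate, mul_assoc]

/- `N` is the number of zeros of `h` in the rectangle, counted with multiplicity. -/
theorem exists_hasRectWinding (hab : a ≤ b) (hcd : c ≤ d) (hh : Differentiable ℂ h)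
    (hbottom : ∀ x ∈ Icc a b, h (x + c * I) ≠ 0) (hright : ∀ y ∈ Icc c d, h (b + y * I) ≠ 0)
    (htop : ∀ x ∈ Icc a b, h (x + d * I) ≠ 0) (hleft : ∀ y ∈ Icc c d, h (a + y * I) ≠ 0) :
    ∃ N, HasRectWinding h a b c d N ∧ (N = 0 → ∀ z ∈ Icc a b ×ℂ Icc c d, h z ≠ 0) := by
  have hne : h ≠ 0 := fun h0 => hleft c (left_mem_Icc.2 hcd) (congrFun h0 _)
  obtain ⟨S, g, hS, hg, hg0, hhg⟩ :=
    exists_eq_multiset_prod_mul hh hne (isCompact_Icc.reProdIm isCompact_Icc)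
  have hSint : ∀ p ∈ S, p ∈ Ioo a b ×ℂ Ioo c d := fun p hp => by
    obtain ⟨hpK, hp0⟩ := hS p hp
    obtain ⟨hre, him⟩ := mem_reProdIm.1 hpK
    rw [← re_add_im p] at hp0
    exact mem_reProdIm.2
      ⟨⟨hre.1.lt_of_ne fun e => hleft _ him (e ▸ hp0),
        hre.2.lt_of_ne fun e => hright _ him (e ▸ hp0)⟩,
      ⟨him.1.lt_of_ne fun e => hbottom _ hre (e ▸ hp0),
        him.2.lt_of_ne fun e => htop _ hre (e ▸ hp0)⟩⟩
  have hwinding := hasRectWinding_multiset_prod_sub hSint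
    (hasRectWinding_zero_of_forall_ne_zero hab hcd hg.continuous hg0)
  refine ⟨_, (funext hhg : h = _) ▸ hwinding, fun hN z hz => ?_⟩
  rw [hhg, Multiset.card_eq_zero.1 (show S.card = 0 by simpa using hN)]
  simpa using hg0 z hz

end ArgumentPrinciple

/-! ### Vertices and deep cones -/

section Vertices

variable {P E : Type*} [AddCommGroup E] [Module ℝ E] (φ : P → Module.Dual ℝ E) (S : Finset P)

open scoped Classical in
/-- The vertices of `S`: its exposed elements. -/
noncomputable def vertices : Finset P := {α ∈ S | ∃ y, face φ S y = {α}}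

/-- The points lying at depth at least `R` in the normal cone of `α`. -/
def deepCone (R : ℝ) (α : P) : Set E := {x | ∀ γ ∈ S, γ ≠ α → R ≤ φ α x - φ γ x}

variable {φ S} {α : P} {u v y : E} {R : ℝ}

lemma mem_vertices : α ∈ vertices φ S ↔ α ∈ S ∧ ∃ y, face φ S y = {α} := by
  classical exact Finset.mem_filter

lemma vertices_subset : vertices φ S ⊆ S := fun _ h => (mem_vertices.1 h).1

lemma exists_injOn_apply (hφ : Set.InjOn φ S) : ∃ u, Set.InjOn (φ · u) (S : Set P) := by
  obtain ⟨u, hu⟩ := Module.Dual.exists_forall_ne_zero_of_forall_exists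
    (fun p : {p : S × S // p.1 ≠ p.2} => φ p.1.1 - φ p.1.2) fun ⟨⟨α, γ⟩, hne⟩ => by
      by_contra! h
      exact hne (Subtype.ext (hφ α.2 γ.2 (sub_eq_zero.1 (LinearMap.ext h))))
  refine ⟨u, fun α hα γ hγ h => by_contra fun hne => ?_⟩
  exact hu ⟨(⟨α, hα⟩, ⟨γ, hγ⟩), by simpa using hne⟩ (sub_eq_zero.2 h)

lemma eventually_injOn_apply_add_smul (hu : Set.InjOn (φ · u) (S : Set P)) (w : E) :
    ∀ᶠ K : ℝ in atTop, Set.InjOn (φ · (u + K • w)) (S : Set P) := by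
  filter_upwards [eventually_forall_apply_add_smul_lt (φ := φ) S w u] with K hK α hα γ hγ h
  have hw : φ α w = φ γ w := le_antisymm (not_lt.1 fun hlt => (hK α hα γ hγ hlt).ne' h)
    (not_lt.1 fun hlt => (hK γ hγ α hα hlt).ne h)
  exact hu hα hγ (by simpa [hw] using h)

lemma exists_injOn_apply_and_face_eq_singleton (hφ : Set.InjOn φ S) (hy : face φ S y = {α}) :
    ∃ w, Set.InjOn (φ · w) (S : Set P) ∧ face φ S w = {α} := by
  obtain ⟨u, hu⟩ := exists_injOn_apply hφ
  obtain ⟨K, hface, hinj⟩ := ((eventually_face_add_smul_eq S y u).and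
    (eventually_injOn_apply_add_smul hu y)).exists
  refine ⟨u + K • y, hinj, face_eq_singleton_of_injOn hinj ?_⟩
  rw [hface, hy]
  simp [mem_face]

lemma exists_mem_vertices_mem_face (hφ : Set.InjOn φ S) (hS : S.Nonempty) (y : E) :
    ∃ γ ∈ vertices φ S, γ ∈ face φ S y := by
  obtain ⟨u, hu⟩ := exists_injOn_apply hφ
  obtain ⟨K, hface, hinj⟩ := ((eventually_face_add_smul_eq S y u).and
    (eventually_injOn_apply_add_smul hu y)).exists
  obtain ⟨γ, hγ⟩ := face_nonempty hS (u + K • y)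
  exact ⟨γ, mem_vertices.2 ⟨face_subset hγ, _, face_eq_singleton_of_injOn hinj hγ⟩,
    face_subset (hface ▸ hγ)⟩

lemma vertices_nonempty (hφ : Set.InjOn φ S) (hS : S.Nonempty) : (vertices φ S).Nonempty :=
  (exists_mem_vertices_mem_face hφ hS 0).imp fun _ h => h.1

lemma mem_face_vertices (hφ : Set.InjOn φ S) :
    α ∈ face φ (vertices φ S) y ↔ α ∈ vertices φ S ∧ α ∈ face φ S y := by
  refine ⟨fun h => ⟨face_subset h, ?_⟩, fun ⟨h, hface⟩ =>
    mem_face.2 ⟨h, fun γ hγ => (mem_face.1 hface).2 γ (vertices_subset hγ)⟩⟩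
  have hα := vertices_subset (face_subset h)
  obtain ⟨δ, hδ, hδface⟩ := exists_mem_vertices_mem_face hφ ⟨α, hα⟩ y
  exact mem_face.2 ⟨hα, fun γ hγ => ((mem_face.1 hδface).2 γ hγ).trans ((mem_face.1 h).2 δ hδ)⟩

lemma inConvexPosition_vertices (hφ : Set.InjOn φ S) : InConvexPosition φ (vertices φ S) := by
  intro α hα
  obtain ⟨-, y, hy⟩ := mem_vertices.1 hα
  refine ⟨y, Finset.ext fun γ => ?_⟩
  rw [mem_face_vertices hφ, hy, Finset.mem_singleton, and_iff_right_iff_imp]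
  rintro rfl
  exact hα

lemma apply_eq_of_forall_vertices (hφ : Set.InjOn φ S) {c : ℝ}
    (h : ∀ γ ∈ vertices φ S, φ γ y = c) (hα : α ∈ S) : φ α y = c := by
  obtain ⟨γ, hγ, hγface⟩ := exists_mem_vertices_mem_face hφ ⟨α, hα⟩ y
  obtain ⟨δ, hδ, hδface⟩ := exists_mem_vertices_mem_face hφ ⟨α, hα⟩ (-y)
  have hmax := (mem_face.1 hγface).2 α hα
  have hmin := (mem_face.1 hδface).2 α hα
  rw [map_neg, map_neg, h δ hδ] at hmin
  rw [h γ hγ] at hmax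
  linarith

lemma exists_isMonotoneAlong_of_apply_le_imp_le (hφ : Set.InjOn φ S) {b : P → ℤ} {m : E}
    (h : ∀ α ∈ S, ∀ γ ∈ S, φ α m ≤ φ γ m → b α ≤ b γ) : ∃ v, IsMonotoneAlong φ S b v := by
  obtain ⟨u, hu⟩ := exists_injOn_apply hφ
  obtain ⟨K, hinj, hK⟩ := ((eventually_injOn_apply_add_smul hu m).and
    (eventually_forall_apply_add_smul_lt S m u)).exists
  refine ⟨u + K • m, hinj, fun y t ht α hα => ?_⟩
  obtain rfl | ht := ht.eq_or_lt
  · exact ⟨α, by simpa using hα, le_rfl⟩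
  obtain ⟨γ, hγ⟩ := face_nonempty ⟨α, face_subset hα⟩ (y + t • (u + K • m))
  refine ⟨γ, hγ, h α (face_subset hα) γ (face_subset hγ) (not_lt.1 fun hlt => ?_)⟩
  have hmax := (mem_face.1 hγ).2 α (face_subset hα)
  have hmax' := (mem_face.1 hα).2 γ (face_subset hγ)
  have hstep := mul_lt_mul_of_pos_left (hK α (face_subset hα) γ (face_subset hγ) hlt) ht
  rw [map_add, map_add _ y, map_smul, map_smul, smul_eq_mul, smul_eq_mul] at hmax
  linarith

lemma convex_deepCone : Convex ℝ (deepCone φ S R α) := by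
  simp only [deepCone, ofPred_forall, ← LinearMap.sub_apply]
  exact convex_iInter₂ fun γ _ => convex_iInter fun _ =>
    convex_halfSpace_ge (φ α - φ γ).isLinear R

lemma eventually_add_smul_mem_deepCone (h : face φ S y = {α}) (R : ℝ) (x : E) :
    ∀ᶠ K : ℝ in atTop, x + K • y ∈ deepCone φ S R α := by
  have hα : α ∈ face φ S y := h ▸ Finset.mem_singleton_self α
  refine (eventually_all_finset S).2 fun γ hγ => eventually_imp_distrib_left.2 fun hne => ?_
  refine (tendsto_sub_apply_add_smul (lt_of_le_of_ne ((mem_face.1 hα).2 γ hγ) fun heq => hne ?_)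
    x).eventually_ge_atTop R
  have hγface : γ ∈ face φ S y := mem_face.2 ⟨hγ, fun δ hδ => heq ▸ (mem_face.1 hα).2 δ hδ⟩
  rwa [h, Finset.mem_singleton] at hγface

lemma isMonotoneAlong_vertices_of_deepCone {b : P → ℤ} (hv : Set.InjOn (φ · v) (S : Set P))
    (h : ∀ α ∈ S, ∀ β ∈ S, ∀ x, ∀ T : ℝ, 0 ≤ T → x ∈ deepCone φ S R α →
      x + T • v ∈ deepCone φ S R β → b α ≤ b β) :
    IsMonotoneAlong φ (vertices φ S) b v where
  injOn := hv.mono (Finset.coe_subset.2 vertices_subset)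
  exists_le y t ht α hα := by
    have hφ : Set.InjOn φ S := fun α hα γ hγ heq => hv hα hγ (congrArg (· v) heq)
    obtain ⟨hαv, hαy⟩ := (mem_face_vertices hφ).1 hα
    obtain ⟨hαS, w₀, hw₀⟩ := mem_vertices.1 hαv
    obtain ⟨w, hw, hwα⟩ := exists_injOn_apply_and_face_eq_singleton hφ hw₀
    obtain ⟨K, hKα, hKγ, hKinj, hK⟩ := ((eventually_face_add_smul_eq (φ := φ) S y w).and
      ((eventually_face_add_smul_eq S (y + t • v) w).and
        ((eventually_injOn_apply_add_smul hw (y + t • v)).and (eventually_ge_atTop 0)))).exists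
    rw [face_face_eq_singleton hαy hwα] at hKα
    obtain ⟨γ, hγ⟩ := face_nonempty ⟨α, hαS⟩ (w + K • (y + t • v))
    have hγsingle := face_eq_singleton_of_injOn hKinj hγ
    refine ⟨γ, (mem_face_vertices hφ).2 ⟨mem_vertices.2 ⟨face_subset hγ, _, hγsingle⟩,
      face_subset (hKγ ▸ hγ)⟩, ?_⟩
    obtain ⟨M, hMα, hMγ, hM⟩ := ((eventually_add_smul_mem_deepCone hKα R 0).and
      ((eventually_add_smul_mem_deepCone hγsingle R 0).and (eventually_ge_atTop 0))).exists
    refine h α hαS γ (face_subset hγ) _ (M * K * t) (by positivity) hMα ?_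
    convert hMγ using 1
    module

end Vertices

/-! ### Exponential sums and winding labels -/

section ExponentialSum

variable {n : ℕ}

/-- The bilinear pairing of an exponent vector with a point of `ℂⁿ`; it extends `pairing`. -/
noncomputable def complexPairing (α : Fin n → ℤ) (w : Fin n → ℂ) : ℂ := ∑ j, (α j : ℂ) * w j

/-- The point `x + iθ` of `ℂⁿ`, with `x` and `θ` the vectors of its real and imaginary parts. -/
def complexPoint (x θ : Fin n → ℝ) : Fin n → ℂ := fun j => x j + θ j * I

/-- The exponential sum `w ↦ f (exp w₁, …, exp wₙ)` of the Laurent polynomial `f` with support `A`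
and coefficients `a`. -/
noncomputable def expSum (A : Finset (Fin n → ℤ)) (a : (Fin n → ℤ) → ℂ) (w : Fin n → ℂ) : ℂ :=
  ∑ α ∈ A, a α * exp (complexPairing α w)

/-- The quotient of an exponential sum by its term of exponent `α`. -/
noncomputable def termRatio (A : Finset (Fin n → ℤ)) (a : (Fin n → ℤ) → ℂ) (α : Fin n → ℤ)
    (w : Fin n → ℂ) : ℂ :=
  (a α)⁻¹ * exp (-complexPairing α w) * expSum A a w

/-- The logarithm of an exponential sum near the points where its term of exponent `α` dominates:
`log (a α) + ⟨α, w⟩`, corrected by the principal logarithm of `termRatio`. -/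
noncomputable def termLog (A : Finset (Fin n → ℤ)) (a : (Fin n → ℤ) → ℂ) (α : Fin n → ℤ)
    (w : Fin n → ℂ) : ℂ :=
  log (a α) + complexPairing α w + log (termRatio A a α w)

/-- At depth `R` in the normal cone of any exponent, the corresponding term dominates so strongly
that `termLog` is a continuous logarithm of the exponential sum. -/
def IsDominanceDepth (A : Finset (Fin n → ℤ)) (a : (Fin n → ℤ) → ℂ) (R : ℝ) : Prop :=
  ∀ α ∈ A, ∀ x ∈ deepCone pairing A R α, ∀ θ, termRatio A a α (complexPoint x θ) ∈ slitPlane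

variable {A : Finset (Fin n → ℤ)} {a : (Fin n → ℤ) → ℂ} {R : ℝ} {α : Fin n → ℤ}

lemma complexPairing_complexPoint (α : Fin n → ℤ) (x θ : Fin n → ℝ) :
    complexPairing α (complexPoint x θ) = pairing α x + pairing α θ * I := by
  simp only [complexPairing, complexPoint, pairing, realPoint, dotProductEquiv_apply_apply,
    dotProduct, mul_add, Finset.sum_add_distrib, ofReal_sum, ofReal_mul, ofReal_intCast,
    Finset.sum_mul, mul_assoc]

@[fun_prop]
lemma continuous_complexPairing (α : Fin n → ℤ) : Continuous (complexPairing α) := by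
  unfold complexPairing
  fun_prop

@[fun_prop]
lemma continuous_expSum : Continuous (expSum A a) := by
  unfold expSum
  fun_prop

@[fun_prop]
lemma continuous_termRatio : Continuous (termRatio A a α) := by
  unfold termRatio
  fun_prop

@[fun_prop]
lemma continuous_complexPoint {X : Type*} [TopologicalSpace X] {x θ : X → Fin n → ℝ}
    (hx : Continuous x) (hθ : Continuous θ) : Continuous fun p => complexPoint (x p) (θ p) := by
  unfold complexPoint
  fun_prop

lemma continuousOn_termLog {X : Type*} [TopologicalSpace X] {s : Set X} {w : X → Fin n → ℂ}
    (hw : Continuous w) (h : ∀ p ∈ s, termRatio A a α (w p) ∈ slitPlane) :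
    ContinuousOn (fun p => termLog A a α (w p)) s :=
  (by fun_prop : Continuous fun p => log (a α) + complexPairing α (w p)).continuousOn.add
    ((by fun_prop : Continuous fun p => termRatio A a α (w p)).continuousOn.clog h)

lemma exp_termLog {w : Fin n → ℂ} (h : termRatio A a α w ≠ 0) :
    exp (termLog A a α w) = expSum A a w := by
  have ha : a α ≠ 0 := fun ha => h (by simp [termRatio, ha])
  rw [termLog, exp_add, exp_add, exp_log ha, exp_log h, termRatio, exp_neg]
  field_simp [exp_ne_zero]

lemma termRatio_sub_one [DecidableEq (Fin n → ℤ)] (hα : α ∈ A) (ha : a α ≠ 0) (w : Fin n → ℂ) :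
    termRatio A a α w - 1 =
      ∑ γ ∈ A.erase α, a γ / a α * exp (complexPairing γ w - complexPairing α w) := by
  have hterm : ∀ γ, (a α)⁻¹ * exp (-complexPairing α w) * (a γ * exp (complexPairing γ w)) =
      a γ / a α * exp (complexPairing γ w - complexPairing α w) := fun γ => by
    rw [sub_eq_neg_add, exp_add]
    ring
  simp only [termRatio, expSum, Finset.mul_sum, hterm]
  rw [← Finset.add_sum_erase _ _ hα, sub_self, exp_zero, mul_one, div_self ha,
    add_sub_cancel_left]

lemma norm_termRatio_sub_one_le [DecidableEq (Fin n → ℤ)] (hα : α ∈ A) (ha : a α ≠ 0)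
    {x : Fin n → ℝ} (hx : x ∈ deepCone pairing A R α) (θ : Fin n → ℝ) :
    ‖termRatio A a α (complexPoint x θ) - 1‖ ≤
      (∑ γ ∈ A.erase α, ‖a γ / a α‖) * Real.exp (-R) := by
  rw [termRatio_sub_one hα ha, Finset.sum_mul]
  refine norm_sum_le_of_le _ fun γ hγ => ?_
  have hre : (complexPairing γ (complexPoint x θ) - complexPairing α (complexPoint x θ)).re =
      -(pairing α x - pairing γ x) := by
    simp [complexPairing_complexPoint]
  rw [norm_mul, norm_exp, hre]
  gcongr
  exact hx γ (Finset.mem_of_mem_erase hγ) (Finset.ne_of_mem_erase hγ)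

lemma exists_isDominanceDepth (ha : ∀ α ∈ A, a α ≠ 0) : ∃ R, IsDominanceDepth A a R := by
  classical
  have hsmall : ∀ α ∈ A, ∀ᶠ R in Filter.atTop,
      (∑ γ ∈ A.erase α, ‖a γ / a α‖) * Real.exp (-R) < 1 := fun α _ => by
    have hlim := Real.tendsto_exp_neg_atTop_nhds_zero.const_mul (∑ γ ∈ A.erase α, ‖a γ / a α‖)
    rw [mul_zero] at hlim
    exact hlim.eventually_lt_const one_pos
  obtain ⟨R, hR⟩ := ((Filter.eventually_all_finset A).2 hsmall).exists
  refine ⟨R, fun α hα x hx θ => ?_⟩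
  rw [← add_sub_cancel 1 (termRatio A a α (complexPoint x θ))]
  exact mem_slitPlane_of_norm_lt_one
    ((norm_termRatio_sub_one_le hα (ha α hα) hx θ).trans_lt (hR α hα))

lemma IsDominanceDepth.exp_termLog (hR : IsDominanceDepth A a R) (hα : α ∈ A) {x : Fin n → ℝ}
    (hx : x ∈ deepCone pairing A R α) (θ : Fin n → ℝ) :
    exp (termLog A a α (complexPoint x θ)) = expSum A a (complexPoint x θ) :=
  Coamoeba.exp_termLog (slitPlane_ne_zero (hR α hα x hx θ))

lemma complexPairing_add_two_pi (α m : Fin n → ℤ) (w : Fin n → ℂ) :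
    complexPairing α (w + fun j => 2 * Real.pi * I * m j) =
      complexPairing α w + (α ⬝ᵥ m : ℤ) * (2 * Real.pi * I) := by
  simp only [complexPairing, dotProduct, Pi.add_apply, mul_add, Finset.sum_add_distrib,
    Int.cast_sum, Int.cast_mul, Finset.sum_mul, add_right_inj]
  exact Finset.sum_congr rfl fun j _ => by ring

lemma expSum_add_two_pi (m : Fin n → ℤ) (w : Fin n → ℂ) :
    expSum A a (w + fun j => 2 * Real.pi * I * m j) = expSum A a w := by
  simp only [expSum, complexPairing_add_two_pi, exp_add, exp_int_mul_two_pi_mul_I, mul_one]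

lemma termLog_add_two_pi (m : Fin n → ℤ) (w : Fin n → ℂ) :
    termLog A a α (w + fun j => 2 * Real.pi * I * m j) =
      termLog A a α w + (α ⬝ᵥ m : ℤ) * (2 * Real.pi * I) := by
  simp only [termLog, termRatio, expSum_add_two_pi, complexPairing_add_two_pi, exp_neg, exp_add,
    exp_int_mul_two_pi_mul_I, mul_one]
  ring

lemma complexPoint_add_two_pi (x θ : Fin n → ℝ) (m : Fin n → ℤ) :
    complexPoint x (θ + fun j => 2 * Real.pi * m j) =
      complexPoint x θ + fun j => 2 * Real.pi * I * m j := by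
  ext j
  simp only [complexPoint, Pi.add_apply, ofReal_add, ofReal_mul, ofReal_ofNat, ofReal_intCast]
  ring

/-- `IsWindingLabel A a R θ k`: the function `x ↦ expSum A a (x + iθ)` has a continuous logarithm on
`ℝⁿ` which, deep in the normal cone of each exponent `α`, is `termLog` shifted by `2πi · k α`. -/
def IsWindingLabel (A : Finset (Fin n → ℤ)) (a : (Fin n → ℤ) → ℂ) (R : ℝ) (θ : Fin n → ℝ)
    (k : (Fin n → ℤ) → ℤ) : Prop :=
  ∃ L : (Fin n → ℝ) → ℂ, Continuous L ∧ (∀ x, exp (L x) = expSum A a (complexPoint x θ)) ∧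
    ∀ α ∈ A, ∀ x ∈ deepCone pairing A R α,
      L x = termLog A a α (complexPoint x θ) + k α * (2 * Real.pi * I)

variable {θ : Fin n → ℝ} {k : (Fin n → ℤ) → ℤ}

lemma exists_isWindingLabel (hR : IsDominanceDepth A a R)
    (h : ∀ x, expSum A a (complexPoint x θ) ≠ 0) : ∃ k, IsWindingLabel A a R θ k := by
  obtain ⟨L, hL, hexp⟩ := exists_continuous_exp_eq
    (f := fun x => expSum A a (complexPoint x θ)) (by fun_prop) h
  have hlabel : ∀ α ∈ A, ∃ k : ℤ, ∀ x ∈ deepCone pairing A R α,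
      L x = termLog A a α (complexPoint x θ) + k * (2 * Real.pi * I) := fun α hα =>
    exists_int_forall_eq_add_of_exp_eq convex_deepCone.isPreconnected hL.continuousOn
      (continuousOn_termLog (by fun_prop) fun x hx => hR α hα x hx θ)
      fun x hx => (hexp x).trans (hR.exp_termLog hα hx θ).symm
  choose! k hk using hlabel
  exact ⟨k, L, hL, hexp, hk⟩

lemma IsWindingLabel.add_two_pi (h : IsWindingLabel A a R θ k) (m : Fin n → ℤ) :
    IsWindingLabel A a R (θ + fun j => 2 * Real.pi * m j) (fun α => k α - α ⬝ᵥ m) := by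
  obtain ⟨L, hL, hexp, hk⟩ := h
  refine ⟨L, hL, fun x => ?_, fun α hα x hx => ?_⟩
  · rw [hexp, complexPoint_add_two_pi, expSum_add_two_pi]
  · rw [hk α hα x hx, complexPoint_add_two_pi, termLog_add_two_pi]
    push_cast
    ring

lemma IsWindingLabel.of_segment (hR : IsDominanceDepth A a R) (h : IsWindingLabel A a R θ k)
    {v : Fin n → ℝ}
    (hne : ∀ t ∈ Icc (0 : ℝ) 1, ∀ x, expSum A a (complexPoint x (θ + t • v)) ≠ 0) :
    IsWindingLabel A a R (θ + v) k := by
  obtain ⟨L, hL, hexp, hk⟩ := h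
  let τ : ℝ → ℝ := fun t => projIcc (0 : ℝ) 1 zero_le_one t
  have hτ : Continuous τ := continuous_subtype_val.comp continuous_projIcc
  have hτ0 : τ 0 = 0 := by simp [τ]
  have hτ1 : τ 1 = 1 := by simp [τ]
  obtain ⟨G, hG, hGexp⟩ := exists_continuous_exp_eq (X := (Fin n → ℝ) × ℝ)
    (f := fun p => expSum A a (complexPoint p.1 (θ + τ p.2 • v))) (by fun_prop)
    fun p => hne _ (Subtype.prop _) _
  obtain ⟨c, hc⟩ := exists_int_forall_eq_add_of_exp_eq isPreconnected_univ hL.continuousOn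
    (L' := fun x => G (x, 0)) (by fun_prop)
    fun x _ => by rw [hexp, hGexp, hτ0, zero_smul, add_zero]
  refine ⟨fun x => G (x, 1) + c * (2 * Real.pi * I), by fun_prop, fun x => ?_, fun α hα x hx => ?_⟩
  · rw [exp_add, exp_int_mul_two_pi_mul_I, mul_one, hGexp, hτ1, one_smul]
  · obtain ⟨l, hl⟩ := exists_int_forall_eq_add_of_exp_eq (isPreconnected_univ (α := ℝ))
      (L := fun t => G (x, t)) (L' := fun t => termLog A a α (complexPoint x (θ + τ t • v)))
      (by fun_prop) (continuousOn_termLog (by fun_prop) fun t _ => hR α hα x hx _)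
      fun t _ => by rw [hGexp, hR.exp_termLog hα hx]
    have hl0 := hl 0 (mem_univ _)
    have hl1 := hl 1 (mem_univ _)
    rw [hτ0, zero_smul, add_zero] at hl0
    rw [hτ1, one_smul] at hl1
    linear_combination hl1 - hl0 - hc x (mem_univ x) + hk α hα x hx

variable {x v : Fin n → ℝ} {k' : (Fin n → ℤ) → ℤ} {β : Fin n → ℤ} {T : ℝ}

lemma complexPoint_add_smul (x θ v : Fin n → ℝ) (s t : ℝ) :
    complexPoint x θ + (s + t * I) • (fun j => (v j : ℂ)) =
      complexPoint (x + s • v) (θ + t • v) := by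
  ext j
  simp only [complexPoint, Pi.add_apply, Pi.smul_apply, smul_eq_mul, ofReal_add, ofReal_mul]
  ring

lemma differentiable_expSum_add_smul (w u : Fin n → ℂ) :
    Differentiable ℂ fun z : ℂ => expSum A a (w + z • u) := by
  simp only [expSum, complexPairing, Pi.add_apply, Pi.smul_apply, smul_eq_mul]
  fun_prop

lemma IsWindingLabel.hasLogVariation (h : IsWindingLabel A a R θ k) (hα : α ∈ A) (hβ : β ∈ A)
    (hx : x ∈ deepCone pairing A R α) (hx' : x + T • v ∈ deepCone pairing A R β) :
    HasLogVariation (fun s => expSum A a (complexPoint (x + s • v) θ)) 0 T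
      (termLog A a β (complexPoint (x + T • v) θ) - termLog A a α (complexPoint x θ) +
        (k β - k α) * (2 * Real.pi * I)) := by
  obtain ⟨L, hL, hexp, hk⟩ := h
  refine ⟨fun s => L (x + s • v), by fun_prop, fun s _ => hexp _, ?_⟩
  beta_reduce
  rw [zero_smul, add_zero, hk α hα x hx, hk β hβ _ hx']
  ring

lemma IsDominanceDepth.hasLogVariation (hR : IsDominanceDepth A a R) (hα : α ∈ A)
    (hx : x ∈ deepCone pairing A R α) (θ v : Fin n → ℝ) :
    HasLogVariation (fun t => expSum A a (complexPoint x (θ + t • v))) 0 1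
      (termLog A a α (complexPoint x (θ + v)) - termLog A a α (complexPoint x θ)) :=
  ⟨fun t => termLog A a α (complexPoint x (θ + t • v)),
    continuousOn_termLog (by fun_prop) fun t _ => hR α hα x hx _,
    fun t _ => hR.exp_termLog hα hx _, by beta_reduce; rw [one_smul, zero_smul, add_zero]⟩

/-- The argument principle on the rectangle of the points `x + sv + i(θ + tv)`, with `0 ≤ s ≤ T` and
`0 ≤ t ≤ 1`. -/
lemma IsWindingLabel.exists_sub_add_natCast_eq (hR : IsDominanceDepth A a R)
    (h : IsWindingLabel A a R θ k) (h' : IsWindingLabel A a R (θ + v) k') (hα : α ∈ A)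
    (hβ : β ∈ A) (hT : 0 ≤ T) (hx : x ∈ deepCone pairing A R α)
    (hx' : x + T • v ∈ deepCone pairing A R β) :
    ∃ N : ℕ, k α - k' α + N = k β - k' β ∧ (N = 0 → ∀ s ∈ Icc 0 T, ∀ t ∈ Icc (0 : ℝ) 1,
      expSum A a (complexPoint (x + s • v) (θ + t • v)) ≠ 0) := by
  let f : ℂ → ℂ := fun z => expSum A a (complexPoint x θ + z • fun j => (v j : ℂ))
  have hfst : ∀ s t : ℝ, f (s + t * I) = expSum A a (complexPoint (x + s • v) (θ + t • v)) :=
    fun s t => congrArg (expSum A a) (complexPoint_add_smul x θ v s t)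
  have hbottom := h.hasLogVariation hα hβ hx hx'
  have htop := h'.hasLogVariation hα hβ hx hx'
  have hleft := hR.hasLogVariation hα hx θ v
  have hright := hR.hasLogVariation hβ hx' θ v
  obtain ⟨N, ⟨bottom, right, top, left, hb, hr, ht, hl, hN⟩, hzero⟩ :=
    exists_hasRectWinding (h := f) hT zero_le_one (differentiable_expSum_add_smul _ _)
      (fun s hs => by rw [hfst, zero_smul, add_zero]; exact hbottom.ne_zero hs)
      (fun t ht => by rw [hfst]; exact hright.ne_zero ht)
      (fun s hs => by rw [hfst, one_smul]; exact htop.ne_zero hs)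
      (fun t ht => by rw [hfst, zero_smul, add_zero]; exact hleft.ne_zero ht)
  simp only [hfst, zero_smul, one_smul, add_zero] at hb hr ht hl
  rw [hb.unique hT hbottom, hr.unique zero_le_one hright, ht.unique hT htop,
    hl.unique zero_le_one hleft] at hN
  refine ⟨N, ?_, fun hN0 s hs t ht => ?_⟩
  · have hcast : (k α - k' α + N : ℂ) = k β - k' β :=
      mul_right_cancel₀ two_pi_I_ne_zero (by linear_combination -hN)
    exact_mod_cast hcast
  · rw [← hfst]
    exact hzero hN0 _ (mem_reProdIm.2 (by simpa using ⟨hs, ht⟩))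

lemma IsWindingLabel.isMonotoneAlong_sub (hR : IsDominanceDepth A a R)
    (h : IsWindingLabel A a R θ k) (h' : IsWindingLabel A a R (θ + v) k')
    (hv : Set.InjOn (pairing · v) (A : Set (Fin n → ℤ))) :
    IsMonotoneAlong pairing (vertices pairing A) (k - k') v :=
  isMonotoneAlong_vertices_of_deepCone hv fun α hα β hβ x T hT hx hx' => by
    obtain ⟨N, hN, -⟩ := h.exists_sub_add_natCast_eq hR h' hα hβ hT hx hx'
    simp only [Pi.sub_apply]
    omega

lemma IsWindingLabel.expSum_ne_zero_of_forall_sub_eq (hR : IsDominanceDepth A a R)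
    (h : IsWindingLabel A a R θ k) (h' : IsWindingLabel A a R (θ + v) k') (hA : A.Nonempty)
    (hv : Set.InjOn (pairing · v) (A : Set (Fin n → ℤ))) {c : ℤ}
    (hc : ∀ α ∈ vertices pairing A, k α - k' α = c) {t : ℝ} (ht : t ∈ Icc (0 : ℝ) 1)
    (x : Fin n → ℝ) : expSum A a (complexPoint x (θ + t • v)) ≠ 0 := by
  obtain ⟨β, hβ⟩ := face_nonempty (φ := pairing) hA v
  obtain ⟨α, hα⟩ := face_nonempty (φ := pairing) hA (-v)
  have hβv := face_eq_singleton_of_injOn hv hβ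
  have hαv := face_eq_singleton_of_injOn (by simpa [Set.InjOn] using hv) hα
  obtain ⟨K, hKα, hKβ, hK⟩ := ((eventually_add_smul_mem_deepCone hαv R x).and
    ((eventually_add_smul_mem_deepCone hβv R x).and (Filter.eventually_ge_atTop 0))).exists
  have hline : ∀ s : ℝ, x + K • -v + s • v = x + (s - K) • v := fun s => by module
  obtain ⟨N, hN, hne⟩ := h.exists_sub_add_natCast_eq hR h' (T := 2 * K) (face_subset hα)
    (face_subset hβ) (by positivity) hKα (by rwa [hline, two_mul, add_sub_cancel_right])
  rw [hc α (mem_vertices.2 ⟨face_subset hα, _, hαv⟩),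
    hc β (mem_vertices.2 ⟨face_subset hβ, _, hβv⟩)] at hN
  simpa [hline] using hne (by omega) K ⟨hK, by linarith⟩ t ht

end ExponentialSum

/-! ### The coamoeba and its lift -/

section Torus

variable {n : ℕ}

/-- The coamoeba of the hypersurface with equation `∑ α ∈ A, a α * z ^ α = 0`. -/
def coamoeba (A : Finset (Fin n → ℤ)) (a : (Fin n → ℤ) → ℂ) :
    Set (Fin n → AddCircle (2 * Real.pi)) :=
  {θ | ∃ z : Fin n → ℂ, (∀ j, z j ≠ 0) ∧ (∑ α ∈ A, a α * ∏ j, z j ^ (α j)) = 0 ∧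
    ∀ j, θ j = ((z j).arg : AddCircle (2 * Real.pi))}

/-- The lifted coamoeba, described through the logarithmic coordinates `z = exp (x + iθ)`. -/
def liftedCoamoeba (A : Finset (Fin n → ℤ)) (a : (Fin n → ℤ) → ℂ) : Set (Fin n → ℝ) :=
  {θ | ∃ x, expSum A a (complexPoint x θ) = 0}

/-- The universal covering of the torus by `ℝⁿ`. -/
noncomputable def torusMk (θ : Fin n → ℝ) : Fin n → AddCircle (2 * Real.pi) := fun j => θ j

variable {A : Finset (Fin n → ℤ)} {a : (Fin n → ℤ) → ℂ} {θ v : Fin n → ℝ}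

lemma isOpenQuotientMap_torusMk : IsOpenQuotientMap (torusMk (n := n)) :=
  IsOpenQuotientMap.piMap fun _ => QuotientAddGroup.isOpenQuotientMap_mk

lemma torusMk_add_two_pi (θ : Fin n → ℝ) (m : Fin n → ℤ) :
    torusMk (θ + fun j => 2 * Real.pi * m j) = torusMk θ := by
  ext j
  rw [torusMk, torusMk, Pi.add_apply, AddCircle.coe_add, add_eq_left, AddCircle.coe_eq_zero_iff]
  exact ⟨m j, by rw [zsmul_eq_mul, mul_comm]⟩

lemma coe_eq_coe_arg_iff {θ : ℝ} {z : ℂ} (hz : z ≠ 0) :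
    (θ : AddCircle (2 * Real.pi)) = z.arg ↔ exp (Real.log ‖z‖ + θ * I) = z := by
  have hexp : exp (Real.log ‖z‖ + θ * I) = z * exp ((θ - z.arg : ℝ) * I) := by
    nth_rw 2 [← exp_log hz]
    rw [← exp_add, log]
    push_cast
    ring_nf
  rw [hexp, mul_eq_left₀ hz, exp_eq_one_iff, ← sub_eq_zero, ← AddCircle.coe_sub,
    AddCircle.coe_eq_zero_iff]
  refine exists_congr fun k => ?_
  rw [← mul_assoc, mul_left_inj' I_ne_zero, zsmul_eq_mul, eq_comm]
  norm_cast

lemma expSum_eq_sum_mul_prod (w : Fin n → ℂ) :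
    expSum A a w = ∑ α ∈ A, a α * ∏ j, exp (w j) ^ (α j) := by
  simp only [expSum, complexPairing, exp_sum, exp_int_mul]

lemma torusMk_mem_coamoeba : torusMk θ ∈ coamoeba A a ↔ θ ∈ liftedCoamoeba A a := by
  constructor
  · rintro ⟨z, hz, hzero, harg⟩
    refine ⟨fun j => Real.log ‖z j‖, ?_⟩
    have hexp : ∀ j, exp (complexPoint (fun j => Real.log ‖z j‖) θ j) = z j := fun j =>
      (coe_eq_coe_arg_iff (hz j)).1 (harg j)
    simpa only [expSum_eq_sum_mul_prod, hexp] using hzero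
  · rintro ⟨x, hx⟩
    refine ⟨fun j => exp (complexPoint x θ j), fun j => exp_ne_zero _, ?_, fun j => ?_⟩
    · rwa [← expSum_eq_sum_mul_prod]
    · refine (coe_eq_coe_arg_iff (exp_ne_zero _)).2 ?_
      simp [norm_exp, complexPoint]

lemma torusMk_mem_closure_coamoeba :
    torusMk θ ∈ closure (coamoeba A a) ↔ θ ∈ closure (liftedCoamoeba A a) := by
  have hpre : torusMk ⁻¹' coamoeba A a = liftedCoamoeba A a :=
    Set.ext fun _ => torusMk_mem_coamoeba
  rw [← mem_preimage, isOpenQuotientMap_torusMk.isOpenMap.preimage_closure_eq_closure_preimage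
    isOpenQuotientMap_torusMk.continuous, hpre]

lemma expSum_ne_zero_of_notMem_closure (h : θ ∉ closure (liftedCoamoeba A a)) (x : Fin n → ℝ) :
    expSum A a (complexPoint x θ) ≠ 0 := fun hx => h (subset_closure ⟨x, hx⟩)

lemma connectedComponentIn_torusMk_eq
    (h : ∀ t ∈ Icc (0 : ℝ) 1, θ + t • v ∉ closure (liftedCoamoeba A a)) :
    connectedComponentIn (closure (coamoeba A a))ᶜ (torusMk (θ + v)) =
      connectedComponentIn (closure (coamoeba A a))ᶜ (torusMk θ) := by
  have hcont : Continuous fun t : ℝ => torusMk (θ + t • v) :=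
    isOpenQuotientMap_torusMk.continuous.comp (by fun_prop)
  have hsub : (fun t : ℝ => torusMk (θ + t • v)) '' Icc 0 1 ⊆ (closure (coamoeba A a))ᶜ := by
    rintro _ ⟨t, ht, rfl⟩
    exact fun hmem => h t ht (torusMk_mem_closure_coamoeba.1 hmem)
  exact connectedComponentIn_eq ((isPreconnected_Icc.image _ hcont.continuousOn
    ).subset_connectedComponentIn ⟨1, by simp⟩ hsub ⟨0, by simp⟩)

lemma isOpen_connectedComponentIn_compl_closure_coamoeba (p : Fin n → AddCircle (2 * Real.pi)) :
    IsOpen (connectedComponentIn (closure (coamoeba A a))ᶜ p) :=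
  have := isOpenQuotientMap_torusMk (n := n).isQuotientMap.locallyPathConnectedSpace
  isClosed_closure.isOpen_compl.connectedComponentIn

end Torus

/-! ### Labels and components -/

section Labels

variable {n : ℕ} {A : Finset (Fin n → ℤ)} {a : (Fin n → ℤ) → ℂ} {R : ℝ} {θ v : Fin n → ℝ}
  {k k' : (Fin n → ℤ) → ℤ}

lemma IsWindingLabel.add_const (h : IsWindingLabel A a R θ k) (c : ℤ) :
    IsWindingLabel A a R θ (fun α => k α + c) := by
  obtain ⟨L, hL, hexp, hk⟩ := h
  refine ⟨fun x => L x + c * (2 * Real.pi * I), by fun_prop, fun x => ?_, fun α hα x hx => ?_⟩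
  · rw [exp_add, exp_int_mul_two_pi_mul_I, mul_one, hexp]
  · simp only [hk α hα x hx, Int.cast_add]
    ring

lemma IsWindingLabel.eventually_add (hR : IsDominanceDepth A a R) (h : IsWindingLabel A a R θ k)
    (hθ : θ ∉ closure (liftedCoamoeba A a)) : ∀ᶠ δ in 𝓝 0, IsWindingLabel A a R (θ + δ) k := by
  obtain ⟨ε, hε, hball⟩ := Metric.isOpen_iff.1 isClosed_closure.isOpen_compl θ hθ
  filter_upwards [Metric.ball_mem_nhds 0 hε] with δ hδ
  refine h.of_segment hR fun t ht => expSum_ne_zero_of_notMem_closure (hball ?_)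
  exact (convex_ball θ ε).add_smul_mem (Metric.mem_ball_self hε) (by simpa using hδ) ht

lemma IsWindingLabel.connectedComponentIn_torusMk_eq (hR : IsDominanceDepth A a R)
    (h : IsWindingLabel A a R θ k) (h' : IsWindingLabel A a R (θ + v) k') (hA : A.Nonempty)
    (hθ : θ ∉ closure (liftedCoamoeba A a)) (hθ' : θ + v ∉ closure (liftedCoamoeba A a))
    (hv : Set.InjOn (pairing · v) (A : Set (Fin n → ℤ))) {c : ℤ}
    (hc : ∀ α ∈ vertices pairing A, k α - k' α = c) :
    connectedComponentIn (closure (coamoeba A a))ᶜ (torusMk (θ + v)) =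
      connectedComponentIn (closure (coamoeba A a))ᶜ (torusMk θ) := by
  refine Coamoeba.connectedComponentIn_torusMk_eq fun t ht => ?_
  rw [mem_closure_iff_frequently, not_frequently, ← map_add_left_nhds_zero, eventually_map]
  filter_upwards [h.eventually_add hR hθ, h'.eventually_add hR hθ'] with δ hδ hδ' ⟨x, hx⟩
  rw [add_right_comm] at hx hδ'
  exact hδ.expSum_ne_zero_of_forall_sub_eq hR hδ' hA hv hc ht x hx

lemma pairing_injective : Function.Injective (pairing (n := n)) := fun α γ h => by
  have hreal : realPoint α = realPoint γ := (dotProductEquiv ℝ (Fin n)).injective h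
  exact funext fun j => Int.cast_injective (congrFun hreal j)

lemma pairing_intCast (α m : Fin n → ℤ) : pairing α (fun j => (m j : ℝ)) = (α ⬝ᵥ m : ℤ) := by
  simp [pairing, realPoint, dotProduct]

lemma homRow_dotProduct (α : Fin n → ℤ) (w : Fin (n + 1) → ℤ) :
    homRow α ⬝ᵥ w = w 0 + α ⬝ᵥ Fin.tail w := by
  simp [homRow, dotProduct, Fin.sum_univ_succ, Fin.tail]

lemma eq_zero_of_forall_vertices_pairing_eq
    (hint : (interior (convexHull ℝ (realPoint '' (A : Set (Fin n → ℤ))))).Nonempty) {c : ℝ}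
    (h : ∀ α ∈ vertices pairing A, pairing α v = c) : v = 0 ∧ c = 0 := by
  have hspan := interior_convexHull_nonempty_iff_affineSpan_eq_top.1 hint
  have hconst : (dotProductEquiv ℝ (Fin n) v).toAffineMap = AffineMap.const ℝ _ c := by
    refine AffineMap.ext_on hspan ?_
    rintro _ ⟨α, hα, rfl⟩
    simpa [pairing, dotProduct_comm] using
      apply_eq_of_forall_vertices pairing_injective.injOn h hα
  have hc : c = 0 := by simpa using (DFunLike.congr_fun hconst 0).symm
  refine ⟨(dotProductEquiv ℝ (Fin n)).map_eq_zero_iff.1 (LinearMap.ext fun x => ?_), hc⟩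
  simpa [hc] using DFunLike.congr_fun hconst x

lemma eq_zero_of_forall_vertices_homRow_dotProduct_eq_zero
    (hint : (interior (convexHull ℝ (realPoint '' (A : Set (Fin n → ℤ))))).Nonempty)
    {w : Fin (n + 1) → ℤ} (h : ∀ α ∈ vertices pairing A, homRow α ⬝ᵥ w = 0) : w = 0 := by
  have hpairing : ∀ α ∈ vertices pairing A,
      pairing α (fun j => (Fin.tail w j : ℝ)) = ((-w 0 : ℤ) : ℝ) := fun α hα => by
    rw [pairing_intCast, Int.cast_inj, eq_neg_iff_add_eq_zero, add_comm, ← homRow_dotProduct,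
      h α hα]
  obtain ⟨htail, hhead⟩ := eq_zero_of_forall_vertices_pairing_eq hint hpairing
  refine funext (Fin.cases (by simpa using hhead) fun j => ?_)
  simpa [Fin.tail] using congrFun htail j

end Labels

/-! ### Generic representatives and the bound -/

section GenericPerturbation

variable {P E I ι : Type*} [AddCommGroup E] [Module ℝ E] {φ : P → Module.Dual ℝ E}
  {S : Finset P} {u : E}

lemma finite_setOf_not_injOn_apply_add_smul (hu : InjOn (φ · u) (S : Set P)) (w : E) :
    {s : ℝ | ¬ InjOn (φ · (w + s • u)) (S : Set P)}.Finite := by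
  classical
  refine (S.offDiag.finite_toSet.biUnion (t := fun p => {s : ℝ | φ p.1 (w + s • u) =
    φ p.2 (w + s • u)}) fun p hp => Set.Subsingleton.finite fun s hs t ht => ?_).subset
    fun s hs => ?_
  · obtain ⟨hα, hγ, hne⟩ := Finset.mem_offDiag.1 hp
    have hsub : φ p.1 u - φ p.2 u ≠ 0 := sub_ne_zero.2 fun heq => hne (hu hα hγ heq)
    simp only [mem_ofPred_eq, map_add, map_smul, smul_eq_mul] at hs ht
    exact mul_right_cancel₀ hsub (by linear_combination hs - ht)
  · simp only [InjOn, mem_ofPred_eq] at hs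
    push Not at hs
    obtain ⟨α, hα, γ, hγ, heq, hne⟩ := hs
    exact mem_biUnion (Finset.mem_coe.2 (Finset.mem_offDiag.2 ⟨hα, hγ, hne⟩ : (α, γ) ∈ _)) heq

lemma exists_forall_mem_forall_injOn [TopologicalSpace E] [ContinuousAdd E] [ContinuousSMul ℝ E]
    [Finite I] [Countable ι] (hφ : InjOn φ S) {U : I → Set E} (hU : ∀ i, IsOpen (U i))
    (hne : ∀ i, (U i).Nonempty) (d : ι → E) :
    ∃ θ : I → E, (∀ i, θ i ∈ U i) ∧
      ∀ i j, i ≠ j → ∀ m, InjOn (φ · (θ i - θ j + d m)) (S : Set P) := by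
  obtain ⟨u, hu⟩ := exists_injOn_apply hφ
  choose θ₀ hθ₀ using hne
  let c : I → ℝ := fun i => (Finite.equivFin I i : ℕ)
  have hc : Function.Injective c :=
    Nat.cast_injective.comp (Fin.val_injective.comp (Finite.equivFin I).injective)
  have hnear : ∀ᶠ s : ℝ in 𝓝 0, ∀ i, θ₀ i + (c i * s) • u ∈ U i :=
    Filter.eventually_all.2 fun i => by
      have hcont : Continuous fun s : ℝ => θ₀ i + (c i * s) • u := by fun_prop
      exact hcont.continuousAt.eventually_mem ((hU i).mem_nhds (by simpa using hθ₀ i))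
  have hbad : (⋃ (i) (j) (_ : i ≠ j) (m), {s : ℝ | ¬ InjOn
      (φ · (θ₀ i - θ₀ j + d m + ((c i - c j) * s) • u)) (S : Set P)}).Countable :=
    countable_iUnion fun i => countable_iUnion fun j => countable_iUnion fun hij =>
      countable_iUnion fun m => Set.Countable.preimage_of_injOn
        (finite_setOf_not_injOn_apply_add_smul hu _).countable
        (mul_right_injective₀ (sub_ne_zero.2 (hc.ne hij))).injOn
  obtain ⟨s, hgood, hs⟩ := (hbad.dense_compl ℝ).inter_nhds_nonempty hnear
  refine ⟨fun i => θ₀ i + (c i * s) • u, hs, fun i j hij m => ?_⟩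
  by_contra h
  refine hgood (mem_iUnion₂.2 ⟨i, j, mem_iUnion₂.2 ⟨hij, m, ?_⟩⟩)
  convert h using 4
  module

end GenericPerturbation

section Translates

variable {I : Type*} {n : ℕ} {A : Finset (Fin n → ℤ)} {a : (Fin n → ℤ) → ℂ} {R : ℝ}
  {θ : I → Fin n → ℝ} {τ : I → (Fin n → ℤ) → ℤ}

/-- The translate of the point `θ i` by the lattice vector `2πm`, for `p = (i, (c, m))`. It carries
the label `-translates τ p` when each `θ i` carries the label `-τ i`. -/
noncomputable def translatePoint (θ : I → Fin n → ℝ) (p : I × (Fin (n + 1) → ℤ)) : Fin n → ℝ :=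
  θ p.1 + fun j => 2 * Real.pi * Fin.tail p.2 j

/-- The points `θ i` are in general position with respect to `A`: no two elements of `A` take the
same value on the difference of translates of two of them. -/
def IsGeneric (A : Finset (Fin n → ℤ)) (θ : I → Fin n → ℝ) : Prop :=
  ∀ p q, p.1 ≠ q.1 →
    InjOn (pairing · (translatePoint θ p - translatePoint θ q)) (A : Set (Fin n → ℤ))

lemma torusMk_translatePoint (θ : I → Fin n → ℝ) (p : I × (Fin (n + 1) → ℤ)) :
    torusMk (translatePoint θ p) = torusMk (θ p.1) :=
  torusMk_add_two_pi _ _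

lemma translatePoint_notMem_closure (h : ∀ i, θ i ∉ closure (liftedCoamoeba A a))
    (p : I × (Fin (n + 1) → ℤ)) : translatePoint θ p ∉ closure (liftedCoamoeba A a) := by
  rw [← torusMk_mem_closure_coamoeba, torusMk_translatePoint, torusMk_mem_closure_coamoeba]
  exact h p.1

lemma exists_isGeneric [Finite I] {C : I → Set (Fin n → AddCircle (2 * Real.pi))}
    (hC : ∀ i, ∃ p ∈ (closure (coamoeba A a))ᶜ,
      C i = connectedComponentIn (closure (coamoeba A a))ᶜ p) :
    ∃ θ : I → Fin n → ℝ, IsGeneric A θ ∧ (∀ i, θ i ∉ closure (liftedCoamoeba A a)) ∧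
      ∀ i, C i = connectedComponentIn (closure (coamoeba A a))ᶜ (torusMk (θ i)) := by
  choose p hp hCp using hC
  let s : (Fin (n + 1) → ℤ) → Fin n → ℝ := fun w j => 2 * Real.pi * Fin.tail w j
  obtain ⟨θ, hθ, hinj⟩ := exists_forall_mem_forall_injOn (S := A) pairing_injective.injOn
    (U := fun i => torusMk ⁻¹' C i)
    (fun i => (hCp i ▸ isOpen_connectedComponentIn_compl_closure_coamoeba (p i)).preimage
      isOpenQuotientMap_torusMk.continuous)
    (fun i => Set.Nonempty.preimage ⟨p i, hCp i ▸ mem_connectedComponentIn (hp i)⟩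
      isOpenQuotientMap_torusMk.surjective)
    (fun m : (Fin (n + 1) → ℤ) × (Fin (n + 1) → ℤ) => s m.1 - s m.2)
  have hmem : ∀ i, torusMk (θ i) ∈ connectedComponentIn (closure (coamoeba A a))ᶜ (p i) :=
    fun i => hCp i ▸ hθ i
  refine ⟨θ, fun p q hne => ?_, fun i hi => ?_, fun i => ?_⟩
  · convert hinj p.1 q.1 hne (p.2, q.2) using 4
    simp only [translatePoint, s]
    abel
  · exact connectedComponentIn_subset _ _ (hmem i) (torusMk_mem_closure_coamoeba.2 hi)
  · rw [hCp i, connectedComponentIn_eq (hmem i)]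

lemma isWindingLabel_neg_translates (hτ : ∀ i, IsWindingLabel A a R (θ i) (-τ i))
    (p : I × (Fin (n + 1) → ℤ)) :
    IsWindingLabel A a R (translatePoint θ p) (-translates τ p) := by
  have hlabel : -translates τ p = fun α => (-τ p.1) α - α ⬝ᵥ Fin.tail p.2 + -p.2 0 := by
    ext α
    simp only [Pi.neg_apply, translates, homRow_dotProduct]
    ring
  rw [hlabel]
  exact ((hτ p.1).add_two_pi (Fin.tail p.2)).add_const (-p.2 0)

lemma pairwiseMonotone_translates (hR : IsDominanceDepth A a R) (hθ : IsGeneric A θ)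
    (hτ : ∀ i, IsWindingLabel A a R (θ i) (-τ i)) :
    PairwiseMonotone pairing (translates τ) (vertices pairing A) := by
  refine fun p q => Or.inr ?_
  by_cases hpq : p.1 = q.1
  · refine exists_isMonotoneAlong_of_apply_le_imp_le pairing_injective.injOn
      (m := fun j => (Fin.tail (p.2 - q.2) j : ℝ)) fun α _ γ _ h => ?_
    rw [pairing_intCast, pairing_intCast, Int.cast_le] at h
    have hsub : Fin.tail (p.2 - q.2) = Fin.tail p.2 - Fin.tail q.2 := rfl
    rw [hsub, dotProduct_sub, dotProduct_sub] at h
    simp only [Pi.sub_apply, translates, hpq, homRow_dotProduct]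
    linarith
  · have hp : IsWindingLabel A a R
        (translatePoint θ q + (translatePoint θ p - translatePoint θ q)) (-translates τ p) := by
      rw [add_sub_cancel]
      exact isWindingLabel_neg_translates hτ p
    have hmono := (isWindingLabel_neg_translates hτ q).isMonotoneAlong_sub hR hp (hθ p q hpq)
    rw [neg_sub_neg] at hmono
    exact ⟨_, hmono⟩

lemma eq_of_forall_translates_eq (hA : A.Nonempty)
    (hint : (interior (convexHull ℝ (realPoint '' (A : Set (Fin n → ℤ))))).Nonempty)
    (hR : IsDominanceDepth A a R) (hθ : IsGeneric A θ)
    (hcompl : ∀ i, θ i ∉ closure (liftedCoamoeba A a))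
    (hinj : Function.Injective fun i =>
      connectedComponentIn (closure (coamoeba A a))ᶜ (torusMk (θ i)))
    (hτ : ∀ i, IsWindingLabel A a R (θ i) (-τ i)) {p q : I × (Fin (n + 1) → ℤ)}
    (h : ∀ α ∈ vertices pairing A, translates τ p α = translates τ q α) : p = q := by
  have hfst : p.1 = q.1 := by
    by_contra hpq
    have hadd : translatePoint θ q + (translatePoint θ p - translatePoint θ q) =
      translatePoint θ p := add_sub_cancel _ _
    have hcomp := (isWindingLabel_neg_translates hτ q).connectedComponentIn_torusMk_eq hR
      (hadd.symm ▸ isWindingLabel_neg_translates hτ p) hA (translatePoint_notMem_closure hcompl q)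
      (by rw [hadd]; exact translatePoint_notMem_closure hcompl p) (hθ p q hpq) (c := 0)
      fun α hα => by simp [h α hα]
    rw [hadd, torusMk_translatePoint, torusMk_translatePoint] at hcomp
    exact hpq (hinj hcomp)
  refine Prod.ext hfst (sub_eq_zero.1
    (eq_zero_of_forall_vertices_homRow_dotProduct_eq_zero hint fun α hα => ?_))
  simpa [translates, hfst, dotProduct_sub, sub_eq_zero] using h α hα

end Translates

section Bound

variable {I : Type*} [Fintype I] {n : ℕ} {A : Finset (Fin n → ℤ)} {a : (Fin n → ℤ) → ℂ}

theorem card_le_factorial_mul_volume (hA : A.Nonempty) (ha : ∀ α ∈ A, a α ≠ 0)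
    (hint : (interior (convexHull ℝ (realPoint '' (A : Set (Fin n → ℤ))))).Nonempty)
    {C : I → Set (Fin n → AddCircle (2 * Real.pi))} (hinj : Function.Injective C)
    (hC : ∀ i, ∃ p ∈ (closure (coamoeba A a))ᶜ,
      C i = connectedComponentIn (closure (coamoeba A a))ᶜ p) :
    (Fintype.card I : ℝ≥0∞) ≤
      n.factorial * volume (convexHull ℝ (realPoint '' (A : Set (Fin n → ℤ)))) := by
  obtain ⟨R, hR⟩ := exists_isDominanceDepth ha
  obtain ⟨θ, hθ, hcompl, hCθ⟩ := exists_isGeneric hC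
  choose k hk using fun i =>
    exists_isWindingLabel hR (expSum_ne_zero_of_notMem_closure (hcompl i))
  have hτ : ∀ i, IsWindingLabel A a R (θ i) (-(-k) i) := fun i => by
    rw [Pi.neg_apply, neg_neg]
    exact hk i
  choose! b hb using fun (S : Finset (Fin n → ℤ)) (hS : S.Nonempty) => hS
  have hcard := card_le_sum_normalizedVolume hb (vertices_nonempty pairing_injective.injOn hA)
    (inConvexPosition_vertices pairing_injective.injOn) (pairwiseMonotone_translates hR hθ hτ)
    fun p q => eq_of_forall_translates_eq hA hint hR hθ hcompl
      (by rwa [← funext hCθ]) hτ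
  calc (Fintype.card I : ℝ≥0∞)
      ≤ (∑ σ ∈ pullingSimplices pairing (vertices pairing A) b, normalizedVolume σ : ℕ) :=
        Nat.cast_le.2 hcard
    _ ≤ n.factorial *
          volume (convexHull ℝ (realPoint '' (vertices pairing A : Set (Fin n → ℤ)))) :=
        sum_normalizedVolume_le hb
    _ ≤ n.factorial * volume (convexHull ℝ (realPoint '' (A : Set (Fin n → ℤ)))) := by
        gcongr
        exact vertices_subset

end Bound

lemma finite_and_ncard_le_of_forall_card_le {X : Type*} {s : Set X} {c : ℝ≥0∞} (hc : c ≠ ⊤)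
    (h : ∀ t : Finset X, (t : Set X) ⊆ s → (t.card : ℝ≥0∞) ≤ c) :
    s.Finite ∧ (s.ncard : ℝ≥0∞) ≤ c := by
  have hfin : s.Finite := by
    by_contra hinf
    obtain ⟨N, hN⟩ := ENNReal.exists_nat_gt hc
    obtain ⟨t, hts, rfl⟩ := Set.Infinite.exists_subset_card_eq hinf N
    exact hN.not_ge (h t hts)
  refine ⟨hfin, ?_⟩
  rw [Set.ncard_eq_toFinset_card s hfin]
  exact h _ hfin.coe_toFinset.le

end Coamoeba

/-- **Theorem 5.19(b).** For a Laurent polynomial `f` in `n` variables with finite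
nonempty support `A ⊆ ℤⁿ` and nonzero coefficients, whose Newton polytope has nonempty
interior, the set of connected components of the complement in the torus
`Tⁿ = (ℝ/2πℤ)ⁿ` of the closure of the coamoeba of `V_f` is finite, of cardinality at
most `n! · λ(Δ_f)`. -/
theorem coamoeba_closure_complement_components_card_le
    (n : ℕ) (A : Finset (Fin n → ℤ)) (hA : A.Nonempty)
    (a : (Fin n → ℤ) → ℂ) (ha : ∀ α ∈ A, a α ≠ 0)
    (Δ : Set (Fin n → ℝ))
    (hΔ : Δ = convexHull ℝ ((fun (α : Fin n → ℤ) (j : Fin n) => (α j : ℝ)) '' A))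
    (hΔint : (interior Δ).Nonempty)
    (coAmoeba : Set (Fin n → AddCircle (2 * Real.pi)))
    (hcoAmoeba : coAmoeba = {θ : Fin n → AddCircle (2 * Real.pi) | ∃ z : Fin n → ℂ,
      (∀ j, z j ≠ 0) ∧ (∑ α ∈ A, a α * ∏ j, z j ^ (α j)) = 0 ∧
      ∀ j, θ j = ((z j).arg : AddCircle (2 * Real.pi))})
    (comps : Set (Set (Fin n → AddCircle (2 * Real.pi))))
    (hcomps : comps = {C | ∃ θ ∈ (closure coAmoeba)ᶜ,
      C = connectedComponentIn (closure coAmoeba)ᶜ θ}) :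
    comps.Finite ∧
      (comps.ncard : ℝ≥0∞) ≤ (n.factorial : ℝ≥0∞) * MeasureTheory.volume Δ := by
  subst hΔ hcoAmoeba hcomps
  have hbounded := isBounded_convexHull.2 (A.finite_toSet.image Coamoeba.realPoint).isBounded
  refine Coamoeba.finite_and_ncard_le_of_forall_card_le
    (ENNReal.mul_ne_top (ENNReal.natCast_ne_top _) hbounded.measure_lt_top.ne) fun s hs => ?_
  rw [← Fintype.card_coe]
  exact Coamoeba.card_le_factorial_mul_volume hA ha hΔint Subtype.val_injective
    fun C => hs C.2
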